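/- arXiv:1912.00140 — 9 statements merged into one kernel-verified Lean document; each statement's English description precedes it below -/
import Mathlib

section
/- The Riemann zeta value ζ(3) admits the series representation ζ(3) = (5/2) · ∑_{n=1}^∞ (-1)^{n-1} / (n³ · C(2n,n)), where the series on the right converges. -/
open Finset Filter Topology

/-- Apéry's error term. -/
noncomputable def aperyErr (N : ℕ) : ℝ :=
  ∑ j ∈ Finset.range N,
    (-1 : ℝ) ^ (j + 1) * (j.factorial : ℝ) ^ 2 * ((N - j - 1).factorial : ℝ) /
      (2 * ((j : ℝ) + 1) * ((N + j + 1).factorial : ℝ))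

lemma apery_tele (N m : ℕ) (h : m ≤ N) :
    ∑ j ∈ Finset.range m, (-1 : ℝ) ^ j * (j.factorial : ℝ) ^ 2 * ((N - j - 1).factorial : ℝ) /
      ((N + j + 2).factorial : ℝ) =
    1 / ((N : ℝ) + 1) ^ 3 - (-1 : ℝ) ^ m * (m.factorial : ℝ) ^ 2 * ((N - m).factorial : ℝ) /
      (((N : ℝ) + 1) ^ 2 * ((N + m + 1).factorial : ℝ)) := by
  induction m with
  | zero =>
    have : ((N.factorial : ℕ) : ℝ) ≠ 0 := by positivity
    simp [Nat.factorial_succ]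
    field_simp
    ring
  | succ m ih =>
    rw [Finset.sum_range_succ, ih (by omega)]
    obtain ⟨r, rfl⟩ : ∃ r, N = m + 1 + r := ⟨N - (m + 1), by omega⟩
    have e1 : m + 1 + r - m - 1 = r := by omega
    have e2 : m + 1 + r - m = r + 1 := by omega
    have e3 : m + 1 + r - (m + 1) = r := by omega
    have e4 : m + 1 + r + (m + 1) + 1 = (m + 1 + r + m + 1) + 1 := by omega
    have e5 : m + 1 + r + m + 2 = (m + 1 + r + m + 1) + 1 := by omega
    rw [e1, e2, e3, e4, e5, Nat.factorial_succ (m + 1 + r + m + 1), Nat.factorial_succ r,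
      Nat.factorial_succ m]
    have h1 : (((m + 1 + r + m + 1).factorial : ℕ) : ℝ) ≠ 0 := by positivity
    generalize (((m + 1 + r + m + 1).factorial : ℕ)) = F at *
    push_cast
    have h2 : (m : ℝ) + 1 + r + 1 ≠ 0 := by positivity
    have h3 : (m : ℝ) + 1 + r + m + 1 + 1 ≠ 0 := by positivity
    rw [pow_succ]
    field_simp
    ring

lemma aperyErr_succ (N : ℕ) :
    aperyErr (N + 1) - aperyErr N = 1 / ((N : ℝ) + 1) ^ 3 -
      5 / 2 * ((-1 : ℝ) ^ N / (((N : ℝ) + 1) ^ 3 * (Nat.centralBinom (N + 1) : ℝ))) := by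
  have key : ∑ j ∈ Finset.range N,
      (-1 : ℝ) ^ (j + 1) * (j.factorial : ℝ) ^ 2 * ((N + 1 - j - 1).factorial : ℝ) /
      (2 * ((j : ℝ) + 1) * ((N + 1 + j + 1).factorial : ℝ)) - aperyErr N =
      ∑ j ∈ Finset.range N, (-1 : ℝ) ^ j * (j.factorial : ℝ) ^ 2 * ((N - j - 1).factorial : ℝ) /
      ((N + j + 2).factorial : ℝ) := by
    rw [aperyErr, ← Finset.sum_sub_distrib]
    refine Finset.sum_congr rfl fun j hj => ?_
    have hj := Finset.mem_range.1 hj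
    obtain ⟨r, rfl⟩ : ∃ r, N = j + 1 + r := ⟨N - (j + 1), by omega⟩
    have e1 : j + 1 + r - j - 1 = r := by omega
    have e2 : j + 1 + r + 1 - j - 1 = r + 1 := by omega
    have e4 : j + 1 + r + 1 + j + 1 = (j + 1 + r + j + 1) + 1 := by omega
    have e5 : j + 1 + r + j + 2 = (j + 1 + r + j + 1) + 1 := by omega
    rw [e1, e2, e4, e5, Nat.factorial_succ (j + 1 + r + j + 1), Nat.factorial_succ r]
    have h1 : (((j + 1 + r + j + 1).factorial : ℕ) : ℝ) ≠ 0 := by positivity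
    generalize (((j + 1 + r + j + 1).factorial : ℕ)) = F at *
    push_cast
    have h3 : (j : ℝ) + 1 + r + j + 1 + 1 ≠ 0 := by positivity
    rw [pow_succ]
    field_simp
    ring
  rw [apery_tele N N le_rfl] at key
  have hs : aperyErr (N + 1) = ∑ j ∈ Finset.range N,
      (-1 : ℝ) ^ (j + 1) * (j.factorial : ℝ) ^ 2 * ((N + 1 - j - 1).factorial : ℝ) /
      (2 * ((j : ℝ) + 1) * ((N + 1 + j + 1).factorial : ℝ)) +
      (-1 : ℝ) ^ (N + 1) * (N.factorial : ℝ) ^ 2 * ((N + 1 - N - 1).factorial : ℝ) /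
      (2 * ((N : ℝ) + 1) * ((N + 1 + N + 1).factorial : ℝ)) := by
    rw [aperyErr, Finset.sum_range_succ]
  have hc : (Nat.centralBinom (N + 1) : ℝ) * ((N + 1).factorial : ℝ) ^ 2 =
      ((N + N + 1 + 1).factorial : ℝ) := by
    have := Nat.choose_mul_factorial_mul_factorial (n := 2 * (N + 1)) (k := N + 1) (by omega)
    rw [show 2 * (N + 1) - (N + 1) = N + 1 by omega, ← Nat.centralBinom_eq_two_mul_choose] at this
    rw [show N + N + 1 + 1 = 2 * (N + 1) by omega, ← this]
    push_cast
    ring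
  have hc0 : (Nat.centralBinom (N + 1) : ℝ) ≠ 0 := by
    exact_mod_cast (Nat.centralBinom_pos _).ne'
  have e1 : N + 1 - N - 1 = 0 := by omega
  have e2 : N + 1 + N + 1 = N + N + 1 + 1 := by omega
  have e3 : N - N = 0 := by omega
  rw [e3] at key
  rw [e1, e2] at hs
  have hF : ((N + N + 1).factorial : ℝ) = (Nat.centralBinom (N + 1) : ℝ) *
      (((N : ℝ) + 1) * (N.factorial : ℝ)) ^ 2 / (2 * ((N : ℝ) + 1)) := by
    rw [Nat.factorial_succ (N + N + 1), Nat.factorial_succ N] at hc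
    push_cast at hc
    rw [hc]
    field_simp
    ring
  have hN0 : (N.factorial : ℝ) ≠ 0 := by positivity
  rw [← hc, Nat.factorial_succ N] at hs
  rw [hF] at key
  rw [hs, add_sub_right_comm, key]
  push_cast
  rw [pow_succ, Nat.factorial_zero]
  generalize (Nat.centralBinom (N + 1) : ℝ) = C at *
  field_simp
  push_cast
  ring

lemma aperyErr_eq (N : ℕ) : ∑ n ∈ Finset.range N, 1 / ((n : ℝ) + 1) ^ 3 =
    5 / 2 * ∑ n ∈ Finset.range N,
      ((-1 : ℝ) ^ n / (((n : ℝ) + 1) ^ 3 * (Nat.centralBinom (n + 1) : ℝ))) + aperyErr N := by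
  induction N with
  | zero => simp [aperyErr]
  | succ N ih =>
    rw [Finset.sum_range_succ, Finset.sum_range_succ, ih]
    linarith [aperyErr_succ N]

lemma aperyErr_bound (N : ℕ) : |aperyErr N| ≤ 1 / ((N : ℝ) + 1) := by
  rcases Nat.eq_zero_or_pos N with rfl | hN
  · simp [aperyErr]
  have : ∀ j ∈ Finset.range N, |(-1 : ℝ) ^ (j + 1) * (j.factorial : ℝ) ^ 2 *
      ((N - j - 1).factorial : ℝ) / (2 * ((j : ℝ) + 1) * ((N + j + 1).factorial : ℝ))| ≤
      1 / ((N : ℝ) * (N + 1)) := by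
    intro j hj
    have hj := Finset.mem_range.1 hj
    rw [abs_div, abs_mul, abs_mul, abs_pow, abs_neg, abs_one, one_pow, one_mul,
      abs_of_nonneg (by positivity), abs_of_nonneg (by positivity), abs_of_nonneg (by positivity)]
    rw [div_le_div_iff₀ (by positivity) (by positivity)]
    have h1 : j.factorial * (N - j - 1).factorial ≤ (N - 1).factorial := by
      have := Nat.le_of_dvd (Nat.factorial_pos _)
        (Nat.factorial_mul_factorial_dvd_factorial_add j (N - j - 1))
      rwa [show j + (N - j - 1) = N - 1 by omega] at this
    have h2 : j.factorial * (N + 1).factorial ≤ (N + j + 1).factorial := by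
      have := Nat.le_of_dvd (Nat.factorial_pos _)
        (Nat.factorial_mul_factorial_dvd_factorial_add j (N + 1))
      rwa [show j + (N + 1) = N + j + 1 by omega] at this
    have h3 : (N + 1).factorial = (N + 1) * (N * (N - 1).factorial) := by
      rw [Nat.factorial_succ, Nat.mul_factorial_pred (by omega)]
    have h4 : j.factorial ^ 2 * (N - j - 1).factorial * (N * (N + 1)) ≤
        1 * (2 * (j + 1) * (N + j + 1).factorial) := by
      calc j.factorial ^ 2 * (N - j - 1).factorial * (N * (N + 1))
          = (j.factorial * (N - j - 1).factorial) * (j.factorial * (N * (N + 1))) := by ring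
        _ ≤ (N - 1).factorial * (j.factorial * (N * (N + 1))) := Nat.mul_le_mul_right _ h1
        _ = j.factorial * (N + 1).factorial := by rw [h3]; ring
        _ ≤ (N + j + 1).factorial := h2
        _ ≤ 1 * (2 * (j + 1) * (N + j + 1).factorial) := by
          nlinarith [Nat.factorial_pos (N + j + 1), Nat.zero_le (j * (N + j + 1).factorial)]
    exact_mod_cast h4
  have hN' : (0 : ℝ) < N := by exact_mod_cast hN
  calc |aperyErr N| ≤ _ := Finset.abs_sum_le_sum_abs _ _
    _ ≤ ∑ j ∈ Finset.range N, 1 / ((N : ℝ) * (N + 1)) := Finset.sum_le_sum this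
    _ = 1 / ((N : ℝ) + 1) := by
      rw [Finset.sum_const, Finset.card_range, nsmul_eq_mul]
      field_simp

lemma apery_summable_cube : Summable (fun n : ℕ => 1 / ((n : ℝ) + 1) ^ 3) := by
  have := (summable_nat_add_iff 1).2 (Real.summable_one_div_nat_pow.2 (by norm_num : 1 < 3))
  simpa using this

lemma apery_summable : Summable (fun n : ℕ =>
    (-1 : ℝ) ^ n / (((n : ℝ) + 1) ^ 3 * (Nat.centralBinom (n + 1) : ℝ))) := by
  refine Summable.of_norm_bounded apery_summable_cube fun n => ?_
  have h1 : (1 : ℝ) ≤ (Nat.centralBinom (n + 1) : ℝ) := by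
    exact_mod_cast Nat.centralBinom_pos (n + 1)
  rw [norm_div, norm_pow, norm_neg, norm_one, one_pow, Real.norm_of_nonneg (by positivity)]
  apply one_div_le_one_div_of_le (by positivity)
  exact le_mul_of_one_le_right (by positivity) h1

lemma apery_real : ∑' n : ℕ, 1 / ((n : ℝ) + 1) ^ 3 = 5 / 2 * ∑' n : ℕ,
    (-1 : ℝ) ^ n / (((n : ℝ) + 1) ^ 3 * (Nat.centralBinom (n + 1) : ℝ)) := by
  have hE : Tendsto aperyErr atTop (𝓝 0) :=
    squeeze_zero_norm aperyErr_bound tendsto_one_div_add_atTop_nhds_zero_nat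
  have h1 := apery_summable_cube.hasSum.tendsto_sum_nat
  have h2 := (apery_summable.hasSum.tendsto_sum_nat.const_mul (5 / 2)).add hE
  rw [add_zero] at h2
  exact tendsto_nhds_unique h1 (h2.congr fun N => (aperyErr_eq N).symm)

/-- The Riemann zeta value ζ(3) admits the series representation
ζ(3) = (5/2) · ∑_{n=1}^∞ (-1)^{n-1} / (n³ · C(2n,n)), where the series converges. -/
theorem zeta_three_series :
    Summable (fun n : ℕ => ((-1 : ℂ)) ^ n / (((n : ℂ) + 1) ^ 3 * (Nat.centralBinom (n + 1) : ℂ))) ∧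
    riemannZeta 3 =
      (5 / 2) * ∑' n : ℕ, ((-1 : ℂ)) ^ n / (((n : ℂ) + 1) ^ 3 * (Nat.centralBinom (n + 1) : ℂ)) := by
  constructor
  · have := Complex.ofRealCLM.summable apery_summable
    simpa using this
  · have h := congrArg (fun x : ℝ => (x : ℂ)) apery_real
    have hz := zeta_eq_tsum_one_div_nat_add_one_cpow (s := 3) (by norm_num)
    have h3 : ∀ z : ℂ, z ^ (3 : ℂ) = z ^ 3 := fun z => by
      exact_mod_cast Complex.cpow_natCast z 3
    simp only [h3] at hz
    rw [hz]
    push_cast at h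
    exact h
end

section
/- Define b_{n+1} := 2·(-1)ⁿ · C(2n,n) / n² and c_{n+1} := 6·(-1)^{n+1} · C(2n,n) / n³ · (3 + 2n(H_{n-1} - H_{2n-1})) for n ≥ 1, where H_r = ∑_{k=1}^r 1/k (with H_0 = 0). Then c_2 = 12 and for every integer n ≥ 2 one has 6(3 - 8n + 5n²)·b_n + 2n(n-1)²(2n-1)·c_n + n⁴·c_{n+1} = 0. -/
/-- With b_{n+1} := 2·(-1)ⁿ·C(2n,n)/n² and
c_{n+1} := 6·(-1)^{n+1}·C(2n,n)/n³·(3 + 2n(H_{n-1} - H_{2n-1})) for n ≥ 1,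
one has c₂ = 12 and 6(3-8n+5n²)·bₙ + 2n(n-1)²(2n-1)·cₙ + n⁴·c_{n+1} = 0 for every n ≥ 2. -/
theorem h3_coefficients_recursion
    (b c : ℕ → ℚ)
    (hb : ∀ n : ℕ, 1 ≤ n →
      b (n + 1) = 2 * (-1) ^ n * (Nat.centralBinom n : ℚ) / (n : ℚ) ^ 2)
    (hc : ∀ n : ℕ, 1 ≤ n →
      c (n + 1) = 6 * (-1) ^ (n + 1) * (Nat.centralBinom n : ℚ) / (n : ℚ) ^ 3 *
        (3 + 2 * (n : ℚ) * (harmonic (n - 1) - harmonic (2 * n - 1)))) :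
    c 2 = 12 ∧
    ∀ n : ℕ, 2 ≤ n →
      6 * (3 - 8 * (n : ℚ) + 5 * (n : ℚ) ^ 2) * b n
        + 2 * (n : ℚ) * ((n : ℚ) - 1) ^ 2 * (2 * (n : ℚ) - 1) * c n
        + (n : ℚ) ^ 4 * c (n + 1) = 0 := by
  constructor
  · have h := hc 1 le_rfl
    norm_num [Nat.centralBinom, Nat.choose, harmonic] at h
    exact h
  · intro n hn
    obtain ⟨k, rfl⟩ : ∃ k, n = k + 2 := ⟨n - 2, by omega⟩
    have h1 := hb (k + 1) (by omega)
    have h2 := hc (k + 1) (by omega)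
    have h3 := hc (k + 2) (by omega)
    have e1 : k + 1 - 1 = k := by omega
    have e2 : 2 * (k + 1) - 1 = 2 * k + 1 := by omega
    have e3 : k + 2 - 1 = k + 1 := by omega
    have e4 : 2 * (k + 2) - 1 = 2 * k + 1 + 1 + 1 := by omega
    rw [e1, e2] at h2
    rw [e3, e4, harmonic_succ (2 * k + 1 + 1), harmonic_succ (2 * k + 1), harmonic_succ k] at h3
    have hC : ((k : ℚ) + 2) * (Nat.centralBinom (k + 2) : ℚ)
        = 2 * (2 * k + 3) * (Nat.centralBinom (k + 1) : ℚ) := by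
      have := Nat.succ_mul_centralBinom_succ (k + 1)
      have h' : (((k + 1 + 1) * Nat.centralBinom (k + 1 + 1) : ℕ) : ℚ)
          = ((2 * (2 * (k + 1) + 1) * Nat.centralBinom (k + 1) : ℕ) : ℚ) := by
        exact_mod_cast this
      push_cast at h'
      linear_combination h'
    have p1 : (k : ℚ) + 1 ≠ 0 := by positivity
    have p2 : (k : ℚ) + 2 ≠ 0 := by positivity
    have p3 : 2 * (k : ℚ) + 3 ≠ 0 := by positivity
    have hC' : (Nat.centralBinom (k + 2) : ℚ)
        = 2 * (2 * k + 3) * (Nat.centralBinom (k + 1) : ℚ) / (k + 2) := by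
      rw [eq_div_iff p2, ← hC]; ring
    rw [h3, show k + 2 = k + 1 + 1 from rfl, h1, h2, show k + 1 + 1 = k + 2 from rfl, hC']
    generalize (Nat.centralBinom (k + 1) : ℚ) = C
    generalize harmonic k = X
    generalize harmonic (2 * k + 1) = Y
    push_cast
    have q2 : (2 * (k : ℚ) + 1 + 1) = 2 * (k + 1) := by ring
    have q3 : (2 * (k : ℚ) + 1 + 1 + 1) = 2 * k + 3 := by ring
    rw [q3, q2]
    generalize (k : ℚ) = t at *
    rw [pow_succ (-1 : ℚ) (k + 2), pow_succ (-1 : ℚ) (k + 1)]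
    generalize (-1 : ℚ) ^ (k + 1) = s
    field_simp
    ring_nf
    have p4 : 3 + t * 2 ≠ 0 := by
      intro h; apply p3; linarith
    field_simp
    ring
end

section
/- With c_{n+1} := 6·(-1)^{n+1} · C(2n,n) / n³ · (3 + 2n(H_{n-1} - H_{2n-1})) for n ≥ 1, where H_r = ∑_{k=1}^r 1/k (with H_0 = 0), the ratio |c_{n+1}| / (4ⁿ · n^{-5/2}) tends to (12·log 2)/√π as n → ∞. In particular the power series ∑_{n=2}^∞ c_n φⁿ converges for every complex φ with |φ| ≤ 1/4. -/
open Filter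

lemma aux_binom : Tendsto (fun n : ℕ => (Nat.centralBinom n : ℝ) * Real.sqrt n / 4 ^ n) atTop
    (nhds (1 / Real.sqrt Real.pi)) := by
  have h := Stirling.tendsto_stirlingSeq_sqrt_pi
  have h2 : Tendsto (fun n : ℕ => 2 * n) atTop atTop :=
    tendsto_id.const_mul_atTop' (by norm_num)
  have hpi : Real.sqrt Real.pi ≠ 0 := (Real.sqrt_pos.2 Real.pi_pos).ne'
  have h3 := (h.comp h2).div (h.pow 2) (pow_ne_zero 2 hpi)
  have e : Real.sqrt Real.pi / Real.sqrt Real.pi ^ 2 = 1 / Real.sqrt Real.pi := by field_simp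
  rw [e] at h3
  refine h3.congr' ?_
  filter_upwards [eventually_gt_atTop 0] with n hn
  have hn' : (0 : ℝ) < n := by exact_mod_cast hn
  have hf : ((2 * n).factorial : ℝ) = Nat.centralBinom n * (n.factorial : ℝ) ^ 2 := by
    have := Nat.choose_mul_factorial_mul_factorial (n := 2 * n) (k := n) (by omega)
    rw [show 2 * n - n = n by omega] at this
    rw [← this, Nat.centralBinom]
    push_cast
    ring
  have hs : Real.sqrt (2 * ((2 * n : ℕ) : ℝ)) = 2 * Real.sqrt n := by
    rw [show (2 * ((2 * n : ℕ) : ℝ)) = 2 ^ 2 * n by push_cast; ring,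
      Real.sqrt_mul (by norm_num), Real.sqrt_sq (by norm_num)]
  have hs2 : Real.sqrt (2 * (n : ℝ)) ^ 2 = 2 * n := Real.sq_sqrt (by positivity)
  have hs3 : Real.sqrt (n : ℝ) ^ 2 = n := Real.sq_sqrt hn'.le
  have hp : (((2 * n : ℕ) : ℝ) / Real.exp 1) ^ (2 * n) = 4 ^ n * (((n : ℝ) / Real.exp 1) ^ n) ^ 2 := by
    rw [show (((2 * n : ℕ) : ℝ) / Real.exp 1) = 2 * (n / Real.exp 1) by push_cast; ring, mul_pow,
      pow_mul, pow_mul', show (2 : ℝ) ^ 2 = 4 by norm_num]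
  have hA : 0 < ((n : ℝ) / Real.exp 1) ^ n := by positivity
  have hF : (0 : ℝ) < n.factorial := by positivity
  have hS : 0 < Real.sqrt (n : ℝ) := Real.sqrt_pos.2 hn'
  simp only [Pi.div_apply, Function.comp, Stirling.stirlingSeq]
  rw [hs, hp, hf]
  generalize ((n : ℝ) / Real.exp 1) ^ n = A at *
  rw [div_pow, mul_pow, hs2]
  rw [← hs3]
  rw [Real.sqrt_sq hS.le]
  field_simp

lemma aux_harm : Tendsto (fun n : ℕ => ((harmonic n : ℝ) - harmonic (2 * n))) atTop
    (nhds (-Real.log 2)) := by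
  have h := Real.tendsto_harmonic_sub_log
  have h2 : Tendsto (fun n : ℕ => 2 * n) atTop atTop :=
    tendsto_id.const_mul_atTop' (by norm_num)
  have h3 := (h.sub (h.comp h2)).sub_const (Real.log 2)
  rw [sub_self, zero_sub] at h3
  refine h3.congr' ?_
  filter_upwards [eventually_gt_atTop 0] with n hn
  have hn' : (n : ℝ) ≠ 0 := by positivity
  simp only [Function.comp]
  push_cast
  rw [Real.log_mul (by norm_num) hn']
  ring

lemma aux_main
    (c : ℕ → ℝ)
    (hc : ∀ n : ℕ, 1 ≤ n →
      c (n + 1) = 6 * (-1) ^ (n + 1) * (Nat.centralBinom n : ℝ) / (n : ℝ) ^ 3 *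
        (3 + 2 * (n : ℝ) * ((harmonic (n - 1) : ℝ) - (harmonic (2 * n - 1) : ℝ)))) :
    Tendsto (fun n : ℕ => |c (n + 1)| / ((4 : ℝ) ^ n * (n : ℝ) ^ (-(5 : ℝ) / 2)))
        atTop (nhds (12 * Real.log 2 / Real.sqrt Real.pi)) := by
  have hl : 0 < Real.log 2 := Real.log_pos (by norm_num)
  have h1 : Tendsto (fun n : ℕ => (2 : ℝ) / n) atTop (nhds 0) :=
    tendsto_const_div_atTop_nhds_zero_nat 2
  have h := ((aux_binom.const_mul 6).mul ((h1.add (aux_harm.const_mul 2)).abs))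
  have e : 6 * (1 / Real.sqrt Real.pi) * |0 + 2 * -Real.log 2|
      = 12 * Real.log 2 / Real.sqrt Real.pi := by
    rw [zero_add, mul_neg, abs_neg, abs_of_pos (by positivity)]; ring
  rw [e] at h
  refine h.congr' ?_
  filter_upwards [eventually_gt_atTop 0] with n hn
  have hn' : (0 : ℝ) < n := by exact_mod_cast hn
  rw [hc n hn]
  have a1 : (harmonic (n - 1) : ℝ) = harmonic n - 1 / n := by
    obtain ⟨m, rfl⟩ : ∃ m, n = m + 1 := ⟨n - 1, by omega⟩
    rw [harmonic_succ]; push_cast; simp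
  have a2 : (harmonic (2 * n - 1) : ℝ) = harmonic (2 * n) - 1 / (2 * n) := by
    obtain ⟨m, hm⟩ : ∃ m, 2 * n = m + 1 := ⟨2 * n - 1, by omega⟩
    have hm' : (2 * n : ℝ) = m + 1 := by exact_mod_cast hm
    rw [hm', hm, harmonic_succ]; push_cast; simp
  have a3 : (3 + 2 * (n : ℝ) * ((harmonic (n - 1) : ℝ) - (harmonic (2 * n - 1) : ℝ)))
      = n * (2 / n + 2 * ((harmonic n : ℝ) - harmonic (2 * n))) := by
    rw [a1, a2]; field_simp; ring
  have hr : (n : ℝ) ^ (-(5 : ℝ) / 2) = Real.sqrt n / n ^ 3 := by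
    rw [Real.sqrt_eq_rpow, ← Real.rpow_natCast (n : ℝ) 3, ← Real.rpow_sub hn']
    norm_num
  have hS : 0 < Real.sqrt (n : ℝ) := Real.sqrt_pos.2 hn'
  have hs3 : Real.sqrt (n : ℝ) ^ 2 = n := Real.sq_sqrt hn'.le
  rw [a3, hr, abs_mul, abs_mul, abs_div, abs_mul, abs_mul, abs_pow, abs_neg, abs_one, one_pow,
    abs_of_pos (by norm_num : (0 : ℝ) < 6), abs_of_pos hn', abs_of_nonneg (Nat.cast_nonneg (α := ℝ) (Nat.centralBinom n)),
    abs_of_pos (by positivity : (0 : ℝ) < (n : ℝ) ^ 3)]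
  generalize |2 / (n : ℝ) + 2 * ((harmonic n : ℝ) - harmonic (2 * n))| = X
  field_simp
  rw [hs3]
  ring

/-- With c_{n+1} := 6·(-1)^{n+1}·C(2n,n)/n³·(3 + 2n(H_{n-1} - H_{2n-1})) for n ≥ 1,
the ratio |c_{n+1}|/(4ⁿ·n^{-5/2}) tends to (12·log 2)/√π, and the power series
∑_{n=2}^∞ cₙφⁿ converges for every |φ| ≤ 1/4. -/
theorem h3_coefficients_asymptotics
    (c : ℕ → ℝ)
    (hc : ∀ n : ℕ, 1 ≤ n →
      c (n + 1) = 6 * (-1) ^ (n + 1) * (Nat.centralBinom n : ℝ) / (n : ℝ) ^ 3 *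
        (3 + 2 * (n : ℝ) * ((harmonic (n - 1) : ℝ) - (harmonic (2 * n - 1) : ℝ)))) :
    Tendsto (fun n : ℕ => |c (n + 1)| / ((4 : ℝ) ^ n * (n : ℝ) ^ (-(5 : ℝ) / 2)))
        atTop (nhds (12 * Real.log 2 / Real.sqrt Real.pi)) ∧
    ∀ φ : ℂ, ‖φ‖ ≤ 1 / 4 →
      Summable (fun n : ℕ => (c (n + 2) : ℂ) * φ ^ (n + 2)) := by
  have hm := aux_main c hc
  refine ⟨hm, fun φ hφ => ?_⟩
  have key : Summable (fun n : ℕ => (c (n + 1) : ℂ) * φ ^ (n + 1)) := by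
    set L := 12 * Real.log 2 / Real.sqrt Real.pi
    have hs : Summable (fun n : ℕ => (L + 1) * (n : ℝ) ^ (-(5 : ℝ) / 2)) :=
      (Real.summable_nat_rpow.2 (by norm_num)).mul_left _
    refine Summable.of_norm_bounded_eventually_nat hs ?_
    filter_upwards [hm.eventually_lt_const (lt_add_one L), eventually_gt_atTop 0] with n h1 hn
    have hn' : (0 : ℝ) < n := by exact_mod_cast hn
    have hr : 0 < (n : ℝ) ^ (-(5 : ℝ) / 2) := Real.rpow_pos_of_pos hn' _
    rw [div_lt_iff₀ (by positivity)] at h1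
    rw [norm_mul, norm_pow, Complex.norm_real, Real.norm_eq_abs]
    have h2 : ‖φ‖ ^ (n + 1) ≤ (1 / 4) ^ n :=
      (pow_le_pow_left₀ (norm_nonneg _) hφ _).trans
        (pow_le_pow_of_le_one (by norm_num) (by norm_num) (by omega))
    calc |c (n + 1)| * ‖φ‖ ^ (n + 1)
        ≤ ((L + 1) * (4 ^ n * (n : ℝ) ^ (-(5 : ℝ) / 2))) * (1 / 4) ^ n :=
          mul_le_mul h1.le h2 (by positivity) ((abs_nonneg _).trans h1.le)
      _ = (L + 1) * (n : ℝ) ^ (-(5 : ℝ) / 2) := by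
          rw [one_div, inv_pow]; field_simp
  exact (summable_nat_add_iff 1).2 key
end

section
/- Let π₀(λ) = ∑_{n=0}^∞ 16^{-n} · C(2n,n)² · λⁿ for complex λ with |λ| < 1. Then π₀ satisfies the Picard–Fuchs equation of the Legendre family of elliptic curves: λ(λ-1)·π₀''(λ) + (2λ-1)·π₀'(λ) + (1/4)·π₀(λ) = 0 for all λ with |λ| < 1. -/
/-- The period π₀(λ) = ∑_{n=0}^∞ 16^{-n}·C(2n,n)²·λⁿ of the Legendre family. -/
noncomputable def legendrePeriod : ℂ → ℂ := fun lam =>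
  ∑' n : ℕ, ((16 : ℂ) ^ n)⁻¹ * (Nat.centralBinom n : ℂ) ^ 2 * lam ^ n

lemma aux_hasSum_congr {f g : ℕ → ℂ} {s : ℂ} (h : ∀ n, f n = g n) :
    HasSum f s ↔ HasSum g s := by
  rw [funext h]

lemma aux_summable_pol (r : ℝ) (h0 : 0 ≤ r) (hr : r < 1) :
    Summable (fun n : ℕ => ((n : ℝ) + 3) ^ 2 * ((n : ℝ) + 1) * r ^ n) := by
  have hn : ‖r‖ < 1 := by rwa [Real.norm_of_nonneg h0]
  have h (k : ℕ) := summable_pow_mul_geometric_of_norm_lt_one (R := ℝ) k hn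
  have := (((h 3).add ((h 2).mul_left 7)).add ((h 1).mul_left 15)).add ((h 0).mul_left 9)
  refine this.congr fun n => ?_
  ring

lemma aux_summable (a : ℕ → ℂ) (ha : ∀ n, ‖a n‖ ≤ ((n : ℝ) + 2) ^ 2) (z : ℂ) (hz : ‖z‖ < 1) :
    Summable (fun n => a n * z ^ n) := by
  refine Summable.of_norm_bounded (aux_summable_pol ‖z‖ (norm_nonneg z) hz) fun n => ?_
  rw [norm_mul, norm_pow]
  refine mul_le_mul_of_nonneg_right ((ha n).trans ?_) (by positivity)
  have : (0 : ℝ) ≤ n := n.cast_nonneg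
  nlinarith [mul_nonneg this this, mul_nonneg (mul_nonneg this this) this]

lemma aux_deriv (a : ℕ → ℂ) (ha : ∀ n, ‖a n‖ ≤ ((n : ℝ) + 2) ^ 2) (z : ℂ) (hz : ‖z‖ < 1) :
    HasDerivAt (fun z => ∑' n, a n * z ^ n)
      (∑' n : ℕ, (((n : ℂ) + 1) * a (n + 1)) * z ^ n) z := by
  obtain ⟨r, hzr, hr⟩ := exists_between hz
  have h0 : 0 ≤ r := (norm_nonneg z).trans hzr.le
  have hu : Summable (fun n : ℕ => ((n : ℝ) + 2) ^ 2 * (n * r ^ (n - 1))) := by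
    rw [← summable_nat_add_iff 1]
    refine (aux_summable_pol r h0 hr).congr fun n => ?_
    rw [Nat.add_sub_cancel]
    push_cast
    ring
  have hb : ∀ (n : ℕ) (y : ℂ), y ∈ Metric.ball (0 : ℂ) r →
      ‖a n * ((n : ℂ) * y ^ (n - 1))‖ ≤ ((n : ℝ) + 2) ^ 2 * (n * r ^ (n - 1)) := by
    intro n y hy
    rw [mem_ball_zero_iff] at hy
    rw [norm_mul, norm_mul, norm_pow, Complex.norm_natCast]
    have := ha n
    gcongr
  have hz' : z ∈ Metric.ball (0 : ℂ) r := by rwa [mem_ball_zero_iff]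
  have key := hasDerivAt_tsum_of_isPreconnected (g := fun n z => a n * z ^ n)
    (g' := fun n y => a n * ((n : ℂ) * y ^ (n - 1))) hu Metric.isOpen_ball
    (convex_ball (0 : ℂ) r).isPreconnected
    (fun n y _ => (hasDerivAt_pow n y).const_mul (a n)) hb hz' (aux_summable a ha z hz) hz'
  have hs : Summable (fun n : ℕ => a n * ((n : ℂ) * z ^ (n - 1))) :=
    Summable.of_norm_bounded hu fun n => hb n z hz'
  rw [hs.tsum_eq_zero_add] at key
  refine key.congr_deriv ?_
  rw [Nat.cast_zero, zero_mul, mul_zero, zero_add]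
  refine tsum_congr fun n => ?_
  rw [Nat.add_sub_cancel]
  push_cast
  ring

/-- Coefficients of the period. -/
noncomputable def auxCoeff (n : ℕ) : ℂ := ((16 : ℂ) ^ n)⁻¹ * (Nat.centralBinom n : ℂ) ^ 2

lemma auxCoeff_norm (n : ℕ) : ‖auxCoeff n‖ ≤ 1 := by
  unfold auxCoeff
  rw [norm_mul, norm_inv, norm_pow, norm_pow, Complex.norm_natCast]
  have h : (Nat.centralBinom n : ℝ) ≤ 4 ^ n := by exact_mod_cast Nat.centralBinom_le_four_pow n
  have h16 : ‖(16 : ℂ)‖ = 16 := by norm_num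
  rw [h16, inv_mul_le_iff₀ (by positivity), mul_one]
  calc (Nat.centralBinom n : ℝ) ^ 2 ≤ (4 ^ n) ^ 2 := by gcongr
    _ = 16 ^ n := by rw [← pow_mul, mul_comm, pow_mul]; norm_num

lemma auxCoeff_rec (n : ℕ) :
    ((n : ℂ) + 1) ^ 2 * auxCoeff (n + 1) = ((n : ℂ) + 1 / 2) ^ 2 * auxCoeff n := by
  have h : ((n : ℂ) + 1) * (Nat.centralBinom (n + 1) : ℂ)
      = 2 * (2 * n + 1) * (Nat.centralBinom n : ℂ) := by
    exact_mod_cast Nat.succ_mul_centralBinom_succ n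
  unfold auxCoeff
  rw [pow_succ (16 : ℂ) n, mul_inv]
  linear_combination ((16 : ℂ) ^ n)⁻¹ * 16⁻¹ * (((n : ℂ) + 1) * (Nat.centralBinom (n + 1) : ℂ)
      + 2 * (2 * n + 1) * (Nat.centralBinom n : ℂ)) * h

lemma aux_shift (b : ℕ → ℂ) (z s : ℂ) (h : HasSum (fun n => b (n + 1) * z ^ n) s)
    (h0 : b 0 = 0) : HasSum (fun n => b n * z ^ n) (z * s) := by
  rw [← hasSum_nat_add_iff' 1]
  simp only [Finset.sum_range_one, h0, zero_mul, sub_zero]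
  refine (aux_hasSum_congr ?_).mpr (h.mul_left z)
  intro n; ring

/-- π₀ satisfies the Picard-Fuchs equation of the Legendre family of elliptic curves:
λ(λ-1)·π₀'' + (2λ-1)·π₀' + (1/4)·π₀ = 0 on the open unit disc. -/
theorem legendrePeriod_satisfies_picard_fuchs :
    ∀ lam : ℂ, ‖lam‖ < 1 →
      lam * (lam - 1) * deriv (deriv legendrePeriod) lam
        + (2 * lam - 1) * deriv legendrePeriod lam
        + (1 / 4) * legendrePeriod lam = 0 := by
  intro z hz
  set a1 : ℕ → ℂ := fun n => ((n : ℂ) + 1) * auxCoeff (n + 1) with ha1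
  set a2 : ℕ → ℂ := fun n => ((n : ℂ) + 1) * a1 (n + 1) with ha2
  have hn1 : ∀ n : ℕ, ‖(n : ℂ) + 1‖ = (n : ℝ) + 1 := fun n => by
    exact_mod_cast Complex.norm_natCast (n + 1)
  have b0 : ∀ n, ‖auxCoeff n‖ ≤ ((n : ℝ) + 2) ^ 2 := fun n => by
    have : (0 : ℝ) ≤ n := n.cast_nonneg
    nlinarith [auxCoeff_norm n]
  have c1 : ∀ n, ‖a1 n‖ ≤ (n : ℝ) + 1 := fun n => by
    rw [ha1, norm_mul, hn1]
    exact mul_le_of_le_one_right (by positivity) (auxCoeff_norm _)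
  have b1 : ∀ n, ‖a1 n‖ ≤ ((n : ℝ) + 2) ^ 2 := fun n => by
    have : (0 : ℝ) ≤ n := n.cast_nonneg
    nlinarith [c1 n]
  have b2 : ∀ n, ‖a2 n‖ ≤ ((n : ℝ) + 2) ^ 2 := fun n => by
    have : (0 : ℝ) ≤ n := n.cast_nonneg
    have h := c1 (n + 1)
    push_cast at h
    rw [ha2, norm_mul, hn1]
    nlinarith
  have e0 : legendrePeriod = fun z => ∑' n, auxCoeff n * z ^ n := by
    funext w; simp only [legendrePeriod, auxCoeff]
  have d1 : ∀ y : ℂ, ‖y‖ < 1 → deriv legendrePeriod y = ∑' n, a1 n * y ^ n := fun y hy => by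
    rw [e0]; exact (aux_deriv auxCoeff b0 y hy).deriv
  have d2 : deriv (deriv legendrePeriod) z = ∑' n, a2 n * z ^ n := by
    rw [← (aux_deriv a1 b1 z hz).deriv]
    apply Filter.EventuallyEq.deriv_eq
    filter_upwards [Metric.isOpen_ball.mem_nhds (mem_ball_zero_iff.mpr hz)] with y hy
    exact d1 y (mem_ball_zero_iff.mp hy)
  rw [d1 z hz, d2, e0]
  have s0 := (aux_summable auxCoeff b0 z hz).hasSum
  have s1 := (aux_summable a1 b1 z hz).hasSum
  have s2 := (aux_summable a2 b2 z hz).hasSum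
  have t1 := aux_shift (fun n => (n : ℂ) * auxCoeff n) z _ (by simpa [ha1] using s1) (by simp)
  have t2 := aux_shift (fun n => (n : ℂ) * a1 n) z _ (by simpa [ha2] using s2) (by simp)
  have t3 := aux_shift (fun n => (n : ℂ) * (((n : ℂ) - 1) * auxCoeff n)) z _
    (by
      refine (aux_hasSum_congr ?_).mpr t2
      intro n
      simp only [ha1]
      push_cast
      ring) (by simp)
  have T := (((t3.sub t2).add (t1.mul_left 2)).sub s1).add (s0.mul_left (1 / 4))
  have Z := T.unique ((aux_hasSum_congr (by
    intro n
    simp only [ha1]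
    linear_combination -z ^ n * auxCoeff_rec n)).mpr hasSum_zero)
  beta_reduce
  linear_combination Z
end

section
/- ∑_{n=1}^∞ C(2n,n) / (4ⁿ · n) = 2·log 2. -/
theorem centralBinom_prod_aux (n : ℕ) :
    ∏ i ∈ Finset.range n, (2 * (i : ℝ) + 1) / (2 * i + 2) =
      (Nat.centralBinom n : ℝ) / 4 ^ n := by
  induction n with
  | zero => simp
  | succ k ih =>
    rw [Finset.prod_range_succ, ih]
    have h : ((k : ℝ) + 1) * (Nat.centralBinom (k + 1) : ℝ)
        = 2 * (2 * k + 1) * Nat.centralBinom k := by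
      exact_mod_cast Nat.succ_mul_centralBinom_succ k
    have hk : (k : ℝ) + 1 ≠ 0 := by positivity
    have h' : (Nat.centralBinom (k + 1) : ℝ)
        = 2 * (2 * k + 1) * Nat.centralBinom k / ((k : ℝ) + 1) := by
      rw [eq_div_iff hk]; linarith
    rw [h', pow_succ]
    field_simp
    ring

theorem log_hasSum_aux (t : ℝ) (ht : t ∈ Set.uIoc 0 (Real.pi / 2)) :
    HasSum (fun n : ℕ => Real.cos t ^ (2 * (n + 1)) / ((n : ℝ) + 1))
      ((-2) * Real.log (Real.sin t)) := by
  have hpi := Real.pi_pos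
  rw [Set.uIoc_of_le (by positivity)] at ht
  have hs : 0 < Real.sin t := Real.sin_pos_of_pos_of_lt_pi ht.1 (by linarith [ht.2])
  have h1 : |Real.cos t ^ 2| < 1 := by
    rw [abs_of_nonneg (sq_nonneg _)]
    nlinarith [Real.sin_sq_add_cos_sq t]
  have h := Real.hasSum_pow_div_log_of_abs_lt_one h1
  have h2 : 1 - Real.cos t ^ 2 = Real.sin t ^ 2 := by linarith [Real.sin_sq_add_cos_sq t]
  rw [h2, Real.log_pow] at h
  simp only [← pow_mul] at h
  convert h using 1
  push_cast
  ring

/-- ∑_{n=1}^∞ C(2n,n)/(4ⁿ·n) = 2·log 2. -/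
theorem centralBinom_inv_n_sum :
    ∑' n : ℕ, (Nat.centralBinom (n + 1) : ℝ) / ((4 : ℝ) ^ (n + 1) * ((n : ℝ) + 1)) =
      2 * Real.log 2 := by
  have hint : IntervalIntegrable (fun t => (-2) * Real.log (Real.sin t)) MeasureTheory.volume
      0 (Real.pi / 2) := IntervalIntegrable.const_mul intervalIntegrable_log_sin (-2)
  have key := intervalIntegral.hasSum_integral_of_dominated_convergence
    (μ := MeasureTheory.volume) (a := 0) (b := Real.pi / 2)
    (F := fun (n : ℕ) t => Real.cos t ^ (2 * (n + 1)) / ((n : ℝ) + 1))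
    (f := fun t => (-2) * Real.log (Real.sin t))
    (fun (n : ℕ) t => Real.cos t ^ (2 * (n + 1)) / ((n : ℝ) + 1))
    (fun n => Continuous.aestronglyMeasurable (by fun_prop))
    (fun n => Filter.Eventually.of_forall fun t _ => by
      rw [Real.norm_of_nonneg]
      rw [pow_mul]
      positivity)
    (Filter.Eventually.of_forall fun t ht => (log_hasSum_aux t ht).summable)
    (hint.congr fun t ht => (log_hasSum_aux t ht).tsum_eq.symm)
    (Filter.Eventually.of_forall fun t ht => log_hasSum_aux t ht)
  rw [intervalIntegral.integral_const_mul, integral_log_sin_zero_pi_div_two] at key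
  simp only [intervalIntegral.integral_div, EulerSine.integral_cos_pow_eq, integral_sin_pow_even,
    centralBinom_prod_aux] at key
  have hpi := Real.pi_ne_zero
  have key2 := (key.mul_left (2 / Real.pi)).tsum_eq
  have e : 2 / Real.pi * ((-2) * (-Real.log 2 * Real.pi / 2)) = 2 * Real.log 2 := by
    field_simp
  rw [← e, ← key2]
  refine tsum_congr fun n => ?_
  field_simp
end

section
/- ∑_{n=1}^∞ C(2n,n) / (4ⁿ · n²) = π²/6 - 2·log²2. -/
open Set Filter Topology

/-- coefficient `C(2n,n)/4^n` -/
noncomputable def cbA (n : ℕ) : ℝ := (Nat.centralBinom n : ℝ) / 4 ^ n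

/-- power series sum -/
noncomputable def cbS (b : ℕ → ℝ) (x : ℝ) : ℝ := ∑' n : ℕ, b n * x ^ n

lemma cbA_nonneg (n : ℕ) : 0 ≤ cbA n := by unfold cbA; positivity

lemma cbA_le (n : ℕ) : cbA n ≤ 1 := by
  unfold cbA
  rw [div_le_one (by positivity)]
  exact_mod_cast Nat.centralBinom_le_four_pow n

lemma cbA_succ (n : ℕ) : ((n : ℝ) + 1) * cbA (n + 1) = (n + 1 / 2) * cbA n := by
  have h : ((n : ℝ) + 1) * (n + 1).centralBinom = 2 * (2 * n + 1) * n.centralBinom :=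
    mod_cast Nat.succ_mul_centralBinom_succ n
  unfold cbA
  rw [pow_succ]
  have h4 : (4 : ℝ) ^ n ≠ 0 := by positivity
  field_simp
  linarith

lemma cbS_zero (b : ℕ → ℝ) : cbS b 0 = b 0 := by
  unfold cbS
  rw [tsum_eq_single 0]
  · simp
  · intro n hn; simp [hn]

lemma cb_summable (b : ℕ → ℝ) (hb : ∀ n, |b n| ≤ 1) {x : ℝ} (hx : |x| < 1) :
    Summable fun n : ℕ => b n * x ^ n := by
  refine Summable.of_norm_bounded (summable_geometric_of_lt_one (abs_nonneg x) hx) fun n => ?_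
  rw [norm_mul, norm_pow, Real.norm_eq_abs, Real.norm_eq_abs]
  exact mul_le_of_le_one_left (by positivity) (hb n)

lemma cb_summable' (b : ℕ → ℝ) (hb : ∀ n, |b n| ≤ 1) {x : ℝ} (hx : |x| < 1) :
    Summable fun n : ℕ => (n : ℝ) * b n * x ^ n := by
  have h := summable_pow_mul_geometric_of_norm_lt_one 1 (r := |x|) (by simpa using hx)
  refine Summable.of_norm_bounded h fun n => ?_
  rw [norm_mul, norm_mul, norm_pow, Real.norm_eq_abs, Real.norm_eq_abs, Real.norm_eq_abs, pow_one,
    Nat.abs_cast]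
  gcongr
  exact mul_le_of_le_one_right (by positivity) (hb n)

lemma cb_summable_shift (b : ℕ → ℝ) (hb : ∀ n, |b n| ≤ 1) {x : ℝ} (hx : |x| < 1) :
    Summable fun n : ℕ => (n : ℝ) * b n * x ^ (n - 1) := by
  have h := summable_pow_mul_geometric_of_norm_lt_one 1 (r := |x|) (by simpa using hx)
  have h0 := summable_geometric_of_lt_one (abs_nonneg x) hx
  rw [← summable_nat_add_iff 1]
  refine Summable.of_norm_bounded (h.add h0) fun n => ?_
  rw [norm_mul, norm_mul, norm_pow, Real.norm_eq_abs, Real.norm_eq_abs, Real.norm_eq_abs, pow_one,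
    Nat.abs_cast, Nat.add_sub_cancel, ← add_one_mul, Nat.cast_add, Nat.cast_one]
  gcongr
  exact mul_le_of_le_one_right (by positivity) (hb _)

/-- termwise derivative -/
lemma cb_deriv (b : ℕ → ℝ) (hb : ∀ n, |b n| ≤ 1) {x : ℝ} (hx : |x| < 1) :
    HasDerivAt (cbS b) (∑' n : ℕ, (n : ℝ) * b n * x ^ (n - 1)) x := by
  obtain ⟨r, hr1, hr2⟩ := exists_between hx
  have hr0 : 0 < r := (abs_nonneg x).trans_lt hr1
  have hu := cb_summable_shift (fun _ => 1) (by simp) (x := r) (by rwa [abs_of_pos hr0])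
  have := hasDerivAt_tsum_of_isPreconnected (g := fun n y => b n * y ^ n)
    (g' := fun n y => (n : ℝ) * b n * y ^ (n - 1)) (t := Ioo (-r) r) (y₀ := 0) (y := x)
    hu isOpen_Ioo isPreconnected_Ioo ?_ ?_ ?_ ?_ ?_
  · exact this
  · intro n y _
    refine HasDerivAt.congr_deriv ((hasDerivAt_pow n y).const_mul (b n)) ?_
    ring
  · intro n y hy
    have hy' : |y| ≤ r := (abs_lt.mpr hy).le
    rw [norm_mul, norm_mul, norm_pow, Real.norm_eq_abs, Real.norm_eq_abs, Real.norm_eq_abs,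
      Nat.abs_cast]
    gcongr
    exact hb n
  · simp [hr0]
  · exact cb_summable b hb (by simp)
  · exact abs_lt.mp hr1

lemma cb_deriv_mul (b c : ℕ → ℝ) (hb : ∀ n, |b n| ≤ 1) {x : ℝ} (hx : |x| < 1)
    (hc : ∀ n : ℕ, (n : ℝ) * b n = c n) :
    ∃ D, HasDerivAt (cbS b) D x ∧ x * D = cbS c x := by
  refine ⟨_, cb_deriv b hb hx, ?_⟩
  rw [← tsum_mul_left]
  unfold cbS
  congr 1
  ext n
  rw [← hc]
  rcases n with _ | n
  · simp
  · simp only [Nat.add_sub_cancel]; ring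

lemma cb_cont (b : ℕ → ℝ) (hb : ∀ n, |b n| ≤ 1 / (n : ℝ) ^ 2) :
    ContinuousOn (cbS b) (Icc 0 1) := by
  refine continuousOn_tsum (u := fun n : ℕ => 1 / (n : ℝ) ^ 2) (fun n => by fun_prop)
    hasSum_zeta_two.summable ?_
  intro n x hx
  rw [norm_mul, norm_pow, Real.norm_eq_abs, Real.norm_eq_abs, abs_of_nonneg hx.1]
  calc |b n| * x ^ n ≤ |b n| * 1 := by
        gcongr; exact pow_le_one₀ hx.1 hx.2
    _ ≤ _ := by simpa using hb n

lemma cb_const {f : ℝ → ℝ} {a b : ℝ} (hab : a < b) (hf : ContinuousOn f (Icc a b))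
    (hd : ∀ x ∈ Ioo a b, HasDerivAt f 0 x) : f b = f a := by
  obtain ⟨c, _, h⟩ := exists_hasDerivAt_eq_slope f (fun _ => 0) hab hf hd
  have : b - a ≠ 0 := by linarith
  field_simp at h
  linarith

lemma cb_x {z : ℝ} (h0 : 0 ≤ z) (h1 : z < 1 / 2) : |4 * z * (1 - z)| < 1 := by
  rw [abs_lt]
  constructor <;> nlinarith [mul_pos (sub_pos.2 h1) (sub_pos.2 h1)]

lemma cb_xd (z : ℝ) : HasDerivAt (fun z : ℝ => 4 * z * (1 - z)) (4 * (1 - 2 * z)) z := by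
  refine HasDerivAt.congr_deriv (((hasDerivAt_id z).const_mul 4).mul ((hasDerivAt_id z).const_sub 1)) ?_
  simp only [id]; ring

lemma cbA_abs (n : ℕ) : |cbA n| ≤ 1 := by
  rw [abs_of_nonneg (cbA_nonneg n)]; exact cbA_le n

lemma cb_div_abs (b : ℕ → ℝ) (hb : ∀ n, |b n| ≤ 1) (n : ℕ) : |b n / n| ≤ 1 := by
  rcases n with _ | n
  · simp
  · rw [abs_div, Nat.abs_cast]
    refine div_le_one_of_le₀ ((hb _).trans ?_) (by positivity)
    push_cast; linarith [n.cast_nonneg (α := ℝ)]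

/-- ODE for the generating function -/
lemma cb_g {z : ℝ} (h0 : 0 ≤ z) (h1 : z < 1 / 2) :
    cbS cbA (4 * z * (1 - z)) * (1 - 2 * z) = 1 := by
  have key : ∀ y : ℝ, 0 ≤ y → y < 1 / 2 →
      HasDerivAt (fun z => cbS cbA (4 * z * (1 - z)) * (1 - 2 * z)) 0 y := by
    intro y hy0 hy1
    have hx := cb_x hy0 hy1
    have hd := cb_deriv cbA cbA_abs hx
    have hD : ∀ x : ℝ, |x| < 1 → (1 - x) * (∑' n : ℕ, (n : ℝ) * cbA n * x ^ (n - 1)) =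
        cbS cbA x / 2 := by
      intro x hx
      have e1 : (∑' n : ℕ, (n : ℝ) * cbA n * x ^ (n - 1)) =
          ∑' n : ℕ, ((n : ℝ) * cbA n * x ^ n + (1 / 2) * (cbA n * x ^ n)) := by
        rw [(cb_summable_shift cbA cbA_abs hx).tsum_eq_zero_add]
        simp only [Nat.cast_zero, zero_mul, zero_add, Nat.add_sub_cancel]
        congr 1; ext n
        push_cast
        rw [cbA_succ]; ring
      have e2 : x * (∑' n : ℕ, (n : ℝ) * cbA n * x ^ (n - 1)) =
          ∑' n : ℕ, (n : ℝ) * cbA n * x ^ n := by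
        rw [← tsum_mul_left]; congr 1; ext n
        rcases n with _ | n
        · simp
        · simp only [Nat.add_sub_cancel]; ring
      rw [(cb_summable' cbA cbA_abs hx).tsum_add ((cb_summable cbA cbA_abs hx).mul_left _),
        ← e2, tsum_mul_left] at e1
      unfold cbS
      linarith
    have hD' := hD _ hx
    have hl : HasDerivAt (fun z : ℝ => 1 - 2 * z) (-2) y := by
      refine HasDerivAt.congr_deriv (((hasDerivAt_id y).const_mul 2).const_sub 1) ?_
      ring
    have hcomp := hd.comp y (cb_xd y)
    refine HasDerivAt.congr_deriv (hcomp.mul hl) ?_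
    simp only [Function.comp]
    linear_combination 4 * hD'
  rcases h0.eq_or_lt with rfl | h0
  · simp [cbS_zero, cbA]
  have := cb_const h0 (fun y hy => (key y hy.1 (hy.2.trans_lt h1)).continuousAt.continuousWithinAt)
    (fun y hy => key y hy.1.le (hy.2.trans h1))
  rw [this]
  simp [cbS_zero, cbA]

lemma cb_Q {z : ℝ} (h0 : 0 ≤ z) (h1 : z < 1 / 2) :
    cbS (fun n => cbA n / n) (4 * z * (1 - z)) = - 2 * Real.log (1 - z) := by
  have hb := cb_div_abs cbA cbA_abs
  have hlog : ∀ y : ℝ, y < 1 / 2 →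
      HasDerivAt (fun z : ℝ => 2 * Real.log (1 - z)) (2 * (-1 / (1 - y))) y := by
    intro y hy
    exact (((hasDerivAt_id y).const_sub 1).log (by simp only [id]; linarith)).const_mul 2
  rcases h0.eq_or_lt with rfl | h0
  · simp [cbS_zero]
  have := cb_const (f := fun z => cbS (fun n => cbA n / n) (4 * z * (1 - z)) + 2 * Real.log (1 - z))
    h0 ?_ ?_
  · simp [cbS_zero] at this
    linarith
  · intro y hy
    have hy1 := hy.2.trans_lt h1
    exact (((cb_deriv _ hb (cb_x hy.1 hy1)).comp y (cb_xd y)).add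
      (hlog y hy1)).continuousAt.continuousWithinAt
  · intro y hy
    have hy1 := hy.2.trans h1
    have hx := cb_x hy.1.le hy1
    obtain ⟨D, hD, hD'⟩ := cb_deriv_mul (fun n => cbA n / n) (fun n => if n = 0 then 0 else cbA n)
      hb hx (by intro n; rcases n with _ | n
                · simp
                · have : ((n + 1 : ℕ) : ℝ) ≠ 0 := by positivity
                  simp only [Nat.add_eq_zero_iff, one_ne_zero, and_false, if_false]
                  field_simp)
    have hg := cb_g hy.1.le hy1
    have e : cbS (fun n => if n = 0 then 0 else cbA n) (4 * y * (1 - y)) =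
        cbS cbA (4 * y * (1 - y)) - 1 := by
      unfold cbS
      rw [(cb_summable cbA cbA_abs hx).tsum_eq_zero_add, Summable.tsum_eq_zero_add]
      · simp [cbA]
      · refine cb_summable _ (fun n => ?_) hx
        split_ifs
        · simp
        · exact cbA_abs n
    rw [e] at hD'
    have hcomp := hD.comp y (cb_xd y)
    refine HasDerivAt.congr_deriv (hcomp.add (hlog y hy1)) ?_
    have h2 : 1 - y ≠ 0 := by linarith
    have hy0 : y ≠ 0 := hy.1.ne'
    have : y * (D * (1 - y) * (1 - 2 * y) * 4 - 2) = 0 := by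
      linear_combination (1 - 2 * y) * hD' + hg
    have := (mul_eq_zero.1 this).resolve_left hy0
    field_simp
    linear_combination this

lemma cb_li {z : ℝ} (h0 : 0 < z) (h1 : z < 1) :
    HasDerivAt (cbS fun n => 1 / (n : ℝ) ^ 2) (- Real.log (1 - z) / z) z := by
  have hz : |z| < 1 := by rwa [abs_of_pos h0]
  obtain ⟨D, hD, hD'⟩ := cb_deriv_mul (fun n => 1 / (n : ℝ) ^ 2) (fun n => 1 / n)
    (by intro n
        have := cb_div_abs _ (cb_div_abs (fun _ => 1) (by simp)) n
        rwa [div_div, ← sq] at this) hz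
    (by intro n; rcases n with _ | n
        · simp
        · have : ((n + 1 : ℕ) : ℝ) ≠ 0 := by positivity
          field_simp)
  have hl := Real.hasSum_pow_div_log_of_abs_lt_one hz
  have : cbS (fun n => 1 / (n : ℝ)) z = - Real.log (1 - z) := by
    rw [← hl.tsum_eq]
    unfold cbS
    rw [(cb_summable _ (cb_div_abs (fun _ => 1) (by simp)) hz).tsum_eq_zero_add]
    simp only [Nat.cast_zero, div_zero, zero_mul, zero_add]
    congr 1; ext n; push_cast; ring
  rw [this] at hD'
  rw [← hD', mul_div_cancel_left₀ _ h0.ne']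
  exact hD

lemma cb_li_cont : ContinuousOn (cbS fun n => 1 / (n : ℝ) ^ 2) (Icc 0 1) :=
  cb_cont _ fun n => (abs_of_nonneg (by positivity)).le

lemma cb_loglog : ContinuousOn (fun z : ℝ => Real.log z * Real.log (1 - z)) (Icc 0 (1 / 2)) := by
  intro z hz
  rcases hz.1.eq_or_lt with rfl | h0
  · have h : Tendsto (fun z : ℝ => 2 * |z * Real.log z|) (𝓝[Icc 0 (1 / 2)] 0) (𝓝 0) := by
      have := (Real.continuous_mul_log.abs.const_mul 2).tendsto 0
      simp only [zero_mul, abs_zero, mul_zero] at this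
      exact this.mono_left nhdsWithin_le_nhds
    have := squeeze_zero_norm' (f := fun z : ℝ => Real.log z * Real.log (1 - z)) ?_ h
    · simpa [ContinuousWithinAt] using this
    · filter_upwards [self_mem_nhdsWithin] with y hy
      have hp : 0 < 1 - y := by linarith [hy.2]
      have h1 := Real.one_sub_inv_le_log_of_pos hp
      have h2 := Real.log_nonpos hp.le (by linarith [hy.1])
      have h3 : -(2 * y) ≤ 1 - (1 - y)⁻¹ := by
        have : (1 - y)⁻¹ ≤ 1 + 2 * y := by
          rw [inv_le_iff_one_le_mul₀ hp]
          nlinarith [hy.1, hy.2]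
        linarith
      rw [Real.norm_eq_abs, abs_mul, abs_mul, abs_of_nonpos h2, abs_of_nonneg hy.1]
      have := mul_le_mul_of_nonneg_left (show -Real.log (1 - y) ≤ 2 * y by linarith)
        (abs_nonneg (Real.log y))
      linarith
  · have : 1 - z ≠ 0 := by linarith [hz.2]
    exact ((Real.continuousAt_log h0.ne').mul
      (((hasDerivAt_id z).const_sub 1).log this).continuousAt).continuousWithinAt

lemma cb_li_half : 2 * cbS (fun n => 1 / (n : ℝ) ^ 2) (1 / 2) =
    Real.pi ^ 2 / 6 - Real.log 2 ^ 2 := by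
  have h1 : cbS (fun n => 1 / (n : ℝ) ^ 2) 1 = Real.pi ^ 2 / 6 := by
    rw [← hasSum_zeta_two.tsum_eq]; simp [cbS]
  have := cb_const (f := fun z => cbS (fun n => 1 / (n : ℝ) ^ 2) z +
    cbS (fun n => 1 / (n : ℝ) ^ 2) (1 - z) + Real.log z * Real.log (1 - z))
    (a := 0) (b := 1 / 2) (by norm_num) ?_ ?_
  · simp only [cbS_zero, sub_zero, h1] at this
    rw [show (1 : ℝ) - 1 / 2 = 1 / 2 by norm_num, one_div, Real.log_inv] at this
    simp at this
    rw [one_div]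
    simp only [one_div]
    linarith
  · refine (ContinuousOn.add (cb_li_cont.mono ?_) (cb_li_cont.comp (by fun_prop) ?_)).add cb_loglog
    · exact Icc_subset_Icc_right (by norm_num)
    · intro z hz
      constructor <;> linarith [hz.1, hz.2]
  · intro z hz
    have hz0 := hz.1
    have hz1 : 0 < 1 - z := by linarith [hz.2]
    have hs := (hasDerivAt_id z).const_sub 1
    have A := cb_li hz0 (by linarith)
    have B := (cb_li hz1 (by linarith)).comp z hs
    have C := (Real.hasDerivAt_log hz0.ne').mul (hs.log hz1.ne')
    refine HasDerivAt.congr_deriv ((A.add B).add C) ?_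
    simp only [id]
    rw [show 1 - (1 - z) = z by ring]
    field_simp
    ring

theorem cb_F : cbS (fun n => cbA n / (n : ℝ) ^ 2) 1 =
    Real.pi ^ 2 / 6 - 2 * Real.log 2 ^ 2 := by
  have hb : ∀ n : ℕ, |cbA n / (n : ℝ) ^ 2| ≤ 1 / (n : ℝ) ^ 2 := by
    intro n
    rw [abs_div, abs_of_nonneg (by positivity : (0 : ℝ) ≤ (n : ℝ) ^ 2)]
    gcongr
    exact cbA_abs n
  have hb1 : ∀ n : ℕ, |cbA n / (n : ℝ) ^ 2| ≤ 1 := by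
    intro n
    have := cb_div_abs _ (cb_div_abs cbA cbA_abs) n
    rwa [div_div, ← sq] at this
  have hlog : ∀ y : ℝ, y ≤ 1 / 2 →
      HasDerivAt (fun z : ℝ => Real.log (1 - z)) (-1 / (1 - y)) y := by
    intro y hy
    exact (((hasDerivAt_id y).const_sub 1).log (by simp only [id]; linarith))
  have := cb_const (f := fun z => cbS (fun n => cbA n / (n : ℝ) ^ 2) (4 * z * (1 - z)) +
    Real.log (1 - z) ^ 2 - 2 * cbS (fun n => 1 / (n : ℝ) ^ 2) z)
    (a := 0) (b := 1 / 2) (by norm_num) ?_ ?_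
  · rw [cb_li_half] at this
    simp only [cbS_zero] at this
    rw [show (1 : ℝ) - 1 / 2 = 2⁻¹ by norm_num, Real.log_inv,
      show (4 : ℝ) * (1 / 2) * 2⁻¹ = 1 by norm_num] at this
    simp [cbS_zero] at this
    linarith
  · refine ContinuousOn.sub (ContinuousOn.add ((cb_cont _ hb).comp (by fun_prop) ?_) ?_) ?_
    · intro z hz
      constructor
      · nlinarith [hz.1, hz.2]
      · nlinarith [sq_nonneg (1 - 2 * z)]
    · exact ContinuousOn.pow (fun y hy => (hlog y hy.2).continuousAt.continuousWithinAt) 2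
    · exact (cb_li_cont.mono (Icc_subset_Icc_right (by norm_num))).const_mul 2
  · intro z hz
    have hz0 := hz.1
    have hz1 : 0 < 1 - z := by linarith [hz.2]
    have hx := cb_x hz0.le hz.2
    obtain ⟨D, hD, hD'⟩ := cb_deriv_mul (fun n => cbA n / (n : ℝ) ^ 2) (fun n => cbA n / n) hb1 hx
      (by intro n; rcases n with _ | n
          · simp
          · have : ((n + 1 : ℕ) : ℝ) ≠ 0 := by positivity
            field_simp)
    rw [cb_Q hz0.le hz.2] at hD'
    have A := cb_li hz0 (by linarith)
    have hcomp := hD.comp z (cb_xd z)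
    refine HasDerivAt.congr_deriv ((hcomp.add ((hlog z hz.2.le).pow 2)).sub (A.const_mul 2)) ?_
    field_simp
    simp
    linear_combination (1 - 2 * z) * hD'

/-- ∑_{n=1}^∞ C(2n,n)/(4ⁿ·n²) = π²/6 - 2·log²2. -/
theorem centralBinom_inv_nsq_sum :
    ∑' n : ℕ, (Nat.centralBinom (n + 1) : ℝ) / ((4 : ℝ) ^ (n + 1) * ((n : ℝ) + 1) ^ 2) =
      Real.pi ^ 2 / 6 - 2 * Real.log 2 ^ 2 := by
  rw [← cb_F]
  unfold cbS
  rw [Summable.tsum_eq_zero_add (f := fun n : ℕ => cbA n / (n : ℝ) ^ 2 * 1 ^ n)]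
  · simp [cbA, div_div]
  · refine Summable.of_norm_bounded hasSum_zeta_two.summable fun n => ?_
    rw [one_pow, mul_one, Real.norm_eq_abs, abs_div,
      abs_of_nonneg (by positivity : (0 : ℝ) ≤ (n : ℝ) ^ 2)]
    gcongr
    exact cbA_abs n
end

section
/- ∑_{n=1}^∞ C(2n,n) / (4ⁿ · n³) = 2·ζ(3) - (1/3)·π²·log 2 + (4/3)·log³2. -/
open Filter Topology Asymptotics

/-- The normalised central binomial coefficient. -/
noncomputable def aa (n : ℕ) : ℝ := (Nat.centralBinom n : ℝ) / 4 ^ n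

lemma aa_zero : aa 0 = 1 := by simp [aa]

lemma aa_pos (n : ℕ) : 0 < aa n := by
  have := Nat.centralBinom_pos n
  unfold aa; positivity

lemma aa_succ (n : ℕ) : ((n : ℝ) + 1) * aa (n + 1) = (n + 1 / 2) * aa n := by
  have h : ((n : ℝ) + 1) * ((n + 1).centralBinom : ℝ) = 2 * (2 * n + 1) * n.centralBinom := by
    exact_mod_cast Nat.succ_mul_centralBinom_succ n
  unfold aa
  rw [← mul_div_assoc, h, pow_succ]
  field_simp
  ring

lemma aa_sq (n : ℕ) : aa n ^ 2 * (2 * n + 1) ≤ 1 := by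
  induction n with
  | zero => simp [aa_zero]
  | succ n ih =>
    have h := aa_succ n
    have h1 : aa (n + 1) = (n + 1 / 2) * aa n / (n + 1) := by
      field_simp; linarith
    refine le_trans ?_ ih
    rw [h1]
    push_cast
    have : ((n + 1 / 2) * aa n / (n + 1)) ^ 2 * (2 * ((n : ℝ) + 1) + 1)
      = aa n ^ 2 * ((n + 1 / 2) ^ 2 * (2 * n + 3) / (n + 1) ^ 2) := by
      field_simp; ring
    rw [this]
    apply mul_le_mul_of_nonneg_left _ (sq_nonneg _)
    rw [div_le_iff₀ (by positivity)]
    have : (0 : ℝ) ≤ n := by positivity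
    nlinarith

lemma aa_le (n : ℕ) : aa n ≤ ((n : ℝ) + 1) ^ (-(1 / 2) : ℝ) := by
  have h := aa_sq n
  have hp := aa_pos n
  have hn : (0 : ℝ) < n + 1 := by positivity
  rw [Real.rpow_neg hn.le, ← Real.sqrt_eq_rpow, ← one_div, le_div_iff₀ (by positivity)]
  have h2 : (aa n * √((n : ℝ) + 1)) ^ 2 ≤ 1 := by
    rw [mul_pow, Real.sq_sqrt hn.le]
    nlinarith [sq_nonneg (aa n), (Nat.cast_nonneg n : (0 : ℝ) ≤ n)]
  nlinarith [mul_nonneg hp.le (Real.sqrt_nonneg ((n : ℝ) + 1))]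

lemma aa_tendsto : Tendsto aa atTop (𝓝 0) := by
  refine squeeze_zero (fun n => (aa_pos n).le) aa_le ?_
  have h := (tendsto_rpow_neg_atTop (y := 1 / 2) (by norm_num))
  have h2 : Tendsto (fun n : ℕ => (n : ℝ) + 1) atTop atTop :=
    tendsto_atTop_add_const_right _ _ tendsto_natCast_atTop_atTop
  exact h.comp h2

lemma aa_summable_one : Summable (fun n : ℕ => aa n / ((n : ℝ) + 1)) := by
  have h : Summable (fun n : ℕ => ((n : ℝ) ^ (-(3 / 2) : ℝ))) :=
    Real.summable_nat_rpow.2 (by norm_num)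
  have h2 := (summable_nat_add_iff 1).2 h
  refine Summable.of_nonneg_of_le (fun n => ?_) (fun n => ?_) h2
  · have := aa_pos n; positivity
  · have hn : (0 : ℝ) < n + 1 := by positivity
    rw [div_le_iff₀ hn]
    refine (aa_le n).trans (le_of_eq ?_)
    push_cast
    nth_rewrite 3 [← Real.rpow_one ((n : ℝ) + 1)]
    rw [← Real.rpow_add hn]
    norm_num

lemma aa_anti (n : ℕ) : aa (n + 1) ≤ aa n := by
  have h := aa_succ n
  have hp := aa_pos n
  have hn : (0 : ℝ) < n + 1 := by positivity
  have : ((n : ℝ) + 1) * aa (n + 1) ≤ (n + 1) * aa n := by rw [h]; gcongr; norm_num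
  exact le_of_mul_le_mul_left this hn

lemma aa_summable_succ (s : ℝ) (hs : 0 ≤ s) :
    Summable (fun n : ℕ => aa (n + 1) / ((n : ℝ) + 1 + s)) := by
  refine Summable.of_nonneg_of_le (fun n => ?_) (fun n => ?_) aa_summable_one
  · have := aa_pos (n + 1); positivity
  · have := aa_pos n
    have := aa_anti n
    exact div_le_div₀ (by linarith) this (by positivity) (by linarith)

lemma aa_summable (s : ℝ) (hs : 0 < s) : Summable (fun n : ℕ => aa n / ((n : ℝ) + s)) := by
  rw [← summable_nat_add_iff 1]
  simpa using aa_summable_succ s hs.le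

/-- The Beta-type series. -/
noncomputable def FF (s : ℝ) : ℝ := ∑' n : ℕ, aa n / ((n : ℝ) + s)

lemma FF_pos (s : ℝ) (hs : 0 < s) : 0 < FF s := by
  refine (aa_summable s hs).tsum_pos (fun n => ?_) 0 ?_
  · have := aa_pos n; positivity
  · have := aa_pos 0; positivity

lemma FF_anti (s t : ℝ) (hs : 0 < s) (h : s ≤ t) : FF t ≤ FF s := by
  refine Summable.tsum_le_tsum (fun n => ?_) (aa_summable t (hs.trans_le h)) (aa_summable s hs)
  have := aa_pos n
  gcongr

lemma FF_rec (s : ℝ) (hs : 0 < s) : (s + 1 / 2) * FF (s + 1) = s * FF s := by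
  have h1 := ((aa_summable (s + 1) (by linarith)).hasSum.mul_left (s + 1 / 2)).sub
    ((aa_summable s hs).hasSum.mul_left s)
  have h2 := h1.tendsto_sum_nat
  have h3 : ∀ N : ℕ, ∑ n ∈ Finset.range N, ((s + 1 / 2) * (aa n / ((n : ℝ) + (s + 1)))
      - s * (aa n / ((n : ℝ) + s))) = - (aa N * (N / (N + s))) := by
    intro N
    induction N with
    | zero => simp
    | succ N ih =>
      rw [Finset.sum_range_succ, ih]
      have h := aa_succ N
      have h1 : aa (N + 1) = (N + 1 / 2) * aa N / (N + 1) := by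
        field_simp; linarith
      rw [h1]
      push_cast
      have : (0 : ℝ) ≤ N := by positivity
      have e1 : (N : ℝ) + 1 ≠ 0 := by positivity
      have e2 : (N : ℝ) + s ≠ 0 := by positivity
      have e3 : (N : ℝ) + (s + 1) ≠ 0 := by positivity
      have e4 : (N : ℝ) + 1 + s ≠ 0 := by positivity
      field_simp
      ring
  have h4 : Tendsto (fun N : ℕ => - (aa N * (N / (N + s)))) atTop (𝓝 0) := by
    rw [← neg_zero]
    refine Tendsto.neg (squeeze_zero (fun n => ?_) (fun n => ?_) aa_tendsto)
    · have := aa_pos n; positivity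
    · have := aa_pos n
      refine mul_le_of_le_one_right this.le ?_
      rw [div_le_one (by positivity)]; linarith
  have h5 := tendsto_nhds_unique (h2.congr h3) h4
  change (s + 1 / 2) * FF (s + 1) - s * FF s = 0 at h5
  linarith

lemma FF_one : FF 1 = 2 := by
  have h2 := ((aa_summable 1 (by linarith)).hasSum).tendsto_sum_nat
  have h3 : ∀ N : ℕ, ∑ n ∈ Finset.range N, (aa n / ((n : ℝ) + 1)) = 2 - 2 * aa N := by
    intro N
    induction N with
    | zero => simp [aa_zero]
    | succ N ih =>
      rw [Finset.sum_range_succ, ih]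
      have h := aa_succ N
      have h1 : aa (N + 1) = (N + 1 / 2) * aa N / (N + 1) := by
        field_simp; linarith
      rw [h1]
      field_simp
      ring
  have h4 : Tendsto (fun N : ℕ => 2 - 2 * aa N) atTop (𝓝 (2 - 2 * 0)) :=
    (aa_tendsto.const_mul 2).const_sub 2
  have h5 := tendsto_nhds_unique (h2.congr h3) h4
  change FF 1 = _ at h5
  rw [h5]; norm_num

/-- General term of the logarithm of the product. -/
noncomputable def uu (s : ℝ) (k : ℕ) : ℝ :=
  Real.log (1 + s * (1 / ((k : ℝ) + 1 / 2))) - Real.log (1 + s * (1 / ((k : ℝ) + 1)))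

lemma log_finite (s : ℝ) (hs : 0 < s) (N : ℕ) :
    ∑ k ∈ Finset.range N, uu s k = Real.log (s * FF s)
      - Real.log ((s + N) * FF (s + N) / ((N + 1 / 2) * FF (N + 1))) := by
  induction N with
  | zero => simp [FF_one]
  | succ N ih =>
    rw [Finset.sum_range_succ, ih]
    have r1 := FF_rec (s + N) (by positivity)
    have r2 := FF_rec ((N : ℝ) + 1) (by positivity)
    have p1 := FF_pos (s + N + 1) (by positivity)
    have p2 := FF_pos ((N : ℝ) + 1 + 1) (by positivity)
    have p3 := FF_pos ((N : ℝ) + 1) (by positivity)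
    push_cast
    rw [← r1, ← add_assoc]
    have e : FF ((N : ℝ) + 1) = ((N : ℝ) + 1 + 1 / 2) * FF ((N : ℝ) + 1 + 1) / (N + 1) := by
      field_simp; linarith
    rw [e]
    unfold uu
    have : Real.log (1 + s * (1 / ((N : ℝ) + 1 / 2))) - Real.log (1 + s * (1 / ((N : ℝ) + 1)))
       = Real.log ((1 + s * (1 / ((N : ℝ) + 1 / 2))) / (1 + s * (1 / ((N : ℝ) + 1)))) := by
      rw [Real.log_div (by positivity) (by positivity)]
    rw [this, sub_add, sub_right_inj, ← Real.log_div (by positivity) (by positivity)]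
    congr 1
    field_simp
    try ring

lemma log_tendsto (s : ℝ) (hs : 0 < s) (hs1 : s ≤ 1) :
    Tendsto (fun N => ∑ k ∈ Finset.range N, uu s k) atTop (𝓝 (Real.log (s * FF s))) := by
  simp_rw [log_finite s hs]
  have key : Tendsto (fun N : ℕ => (s + N) * FF (s + N) / (((N : ℝ) + 1 / 2) * FF (N + 1)))
      atTop (𝓝 1) := by
    have a1 : Tendsto (fun N : ℕ => 1 - 1 / ((N : ℝ) + 1)) atTop (𝓝 1) := by
      simpa using (tendsto_one_div_add_atTop_nhds_zero_nat (𝕜 := ℝ)).const_sub 1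
    have a2 : Tendsto (fun N : ℕ => 1 + 1 / (N : ℝ)) atTop (𝓝 1) := by
      simpa using (tendsto_one_div_atTop_nhds_zero_nat (𝕜 := ℝ)).const_add 1
    refine tendsto_of_tendsto_of_tendsto_of_le_of_le' a1 a2 ?_ ?_
    · filter_upwards [eventually_gt_atTop 0] with N hN
      have hN' : (0 : ℝ) < N := by exact_mod_cast hN
      have f1 := FF_anti (s + N) (N + 1) (by positivity) (by linarith)
      have p := FF_pos ((N : ℝ) + 1) (by positivity)
      have : 1 - 1 / ((N : ℝ) + 1) = N / (N + 1) := by field_simp; ring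
      rw [this, div_le_div_iff₀ (by positivity) (by positivity)]
      calc (N : ℝ) * ((N + 1 / 2) * FF (N + 1)) = N * (N + 1 / 2) * FF (N + 1) := by ring
        _ ≤ (s + N) * (N + 1) * FF (s + N) := by gcongr <;> linarith
        _ = _ := by ring
    · filter_upwards [eventually_gt_atTop 0] with N hN
      have hN' : (0 : ℝ) < N := by exact_mod_cast hN
      have f1 := FF_anti N (s + N) (by positivity) (by linarith)
      have r := FF_rec N hN'
      have p := FF_pos ((N : ℝ) + 1) (by positivity)
      have p' := FF_pos (N : ℝ) (by positivity)
      have p'' := FF_pos (s + N) (by positivity)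
      rw [r]
      have : 1 + 1 / (N : ℝ) = (N + 1) / N := by field_simp
      rw [this, div_le_div_iff₀ (by positivity) (by positivity)]
      calc (s + (N : ℝ)) * FF (s + N) * N ≤ (1 + N) * FF N * N := by gcongr
        _ = _ := by ring
  have := (key.log one_ne_zero).const_sub (Real.log (s * FF s))
  simpa using this

lemma log_taylor (x : ℝ) (h0 : 0 ≤ x) (h1 : x ≤ 1 / 2) :
    |Real.log (1 + x) - (x - x ^ 2 / 2 + x ^ 3 / 3)| ≤ 2 * x ^ 4 := by
  have h := Real.abs_log_sub_add_sum_range_le (x := -x) (by rw [abs_neg, abs_of_nonneg h0]; linarith) 3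
  rw [abs_neg, abs_of_nonneg h0] at h
  simp only [Finset.sum_range_succ, Finset.sum_range_zero] at h
  norm_num at h
  have h2 : x ^ 4 / (1 - x) ≤ 2 * x ^ 4 := by
    rw [div_le_iff₀ (by linarith)]
    nlinarith [pow_nonneg h0 4]
  refine le_trans (le_of_eq ?_) (h.trans h2)
  congr 1
  ring

lemma hasSum_shift {j : ℕ} (hj : 1 < j) {Z : ℝ}
    (h : HasSum (fun n : ℕ => (1 : ℝ) / (n : ℝ) ^ j) Z) :
    HasSum (fun k : ℕ => (1 / ((k : ℝ) + 1)) ^ j) Z := by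
  have h1 := (hasSum_nat_add_iff' 1).2 h
  simp only [Finset.sum_range_one] at h1
  have : ((0 : ℕ) : ℝ) ^ j = 0 := by simp; omega
  rw [this, div_zero, sub_zero] at h1
  simpa using h1

lemma hasSum_half {j : ℕ} (hj : 1 < j) {Z : ℝ}
    (h : HasSum (fun n : ℕ => (1 : ℝ) / (n : ℝ) ^ j) Z) :
    HasSum (fun k : ℕ => (1 / ((k : ℝ) + 1 / 2)) ^ j) ((2 ^ j - 1) * Z) := by
  have hev : HasSum (fun k : ℕ => (1 : ℝ) / ((2 * k : ℕ) : ℝ) ^ j) (Z / 2 ^ j) := by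
    have := h.div_const (2 ^ j)
    refine Eq.mp (congrArg (fun f : ℕ → ℝ => HasSum f _) (funext fun k => ?_)) this
    push_cast
    rw [mul_pow, div_div, mul_comm]
  have hs : Summable (fun k : ℕ => (1 : ℝ) / ((2 * k + 1 : ℕ) : ℝ) ^ j) :=
    h.summable.comp_injective (i := fun k : ℕ => 2 * k + 1) (fun a b hab => by simpa using hab)
  have hodd := HasSum.even_add_odd (f := fun n : ℕ => (1 : ℝ) / (n : ℝ) ^ j) hev hs.hasSum
  have heq := hodd.unique h
  have h3 := hs.hasSum.mul_left ((2 : ℝ) ^ j)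
  have e : (2 : ℝ) ^ j * ∑' k : ℕ, (1 : ℝ) / ((2 * k + 1 : ℕ) : ℝ) ^ j = (2 ^ j - 1) * Z := by
    have : ∑' k : ℕ, (1 : ℝ) / ((2 * k + 1 : ℕ) : ℝ) ^ j = Z - Z / 2 ^ j := by linarith
    rw [this]
    field_simp
  rw [e] at h3
  refine Eq.mp (congrArg (fun f : ℕ → ℝ => HasSum f _) (funext fun k => ?_)) h3
  push_cast
  have : (k : ℝ) + 1 / 2 = (2 * k + 1) / 2 := by ring
  rw [this, one_div_div, div_pow]
  ring

lemma c1_tendsto : Tendsto (fun N : ℕ => ∑ k ∈ Finset.range N,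
    (1 / ((k : ℝ) + 1 / 2) - 1 / ((k : ℝ) + 1))) atTop (𝓝 (2 * Real.log 2)) := by
  have hid : ∀ N : ℕ, ∑ k ∈ Finset.range N, (1 / ((k : ℝ) + 1 / 2) - 1 / ((k : ℝ) + 1))
      = 2 * ((harmonic (2 * N) : ℚ) : ℝ) - 2 * ((harmonic N : ℚ) : ℝ) := by
    intro N
    induction N with
    | zero => simp
    | succ N ih =>
      rw [Finset.sum_range_succ, ih, show 2 * (N + 1) = 2 * N + 1 + 1 by ring, harmonic_succ,
        harmonic_succ, harmonic_succ]
      push_cast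
      field_simp
      ring
  have h := Real.tendsto_harmonic_sub_log
  have h2 : Tendsto (fun N : ℕ => 2 * N) atTop atTop :=
    tendsto_id.const_mul_atTop' (by norm_num)
  have h3 := ((h.comp h2).sub h).const_mul 2
  have h4 := h3.add_const (2 * Real.log 2)
  simp only [sub_self, mul_zero, zero_add] at h4
  refine h4.congr' ?_
  filter_upwards [eventually_gt_atTop 0] with N hN
  have hN' : (0 : ℝ) < N := by exact_mod_cast hN
  rw [hid]
  simp only [Function.comp]
  push_cast
  rw [Real.log_mul (by norm_num) hN'.ne']
  ring

lemma log_expansion (Z : ℝ) (hZ : HasSum (fun n : ℕ => (1 : ℝ) / (n : ℝ) ^ 3) Z) :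
    ∃ C : ℝ, ∀ s : ℝ, 0 < s → s ≤ 1 / 4 →
      |Real.log (s * FF s) - (2 * Real.log 2 * s - Real.pi ^ 2 / 6 * s ^ 2 + 2 * Z * s ^ 3)|
        ≤ C * s ^ 4 := by
  have h4 : HasSum (fun n : ℕ => (1 : ℝ) / (n : ℝ) ^ 4) _ :=
    (Real.summable_one_div_nat_pow.2 (by norm_num)).hasSum
  have hC := ((hasSum_half (by norm_num) h4).add (hasSum_shift (by norm_num) h4)).mul_left 2
  set C := 2 * ((2 ^ 4 - 1) * (∑' n : ℕ, (1 : ℝ) / (n : ℝ) ^ 4) + ∑' n : ℕ, (1 : ℝ) / (n : ℝ) ^ 4)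
  refine ⟨C, fun s hs hs4 => ?_⟩
  have t2 := ((hasSum_half (by norm_num) hasSum_zeta_two).sub
    (hasSum_shift (by norm_num) hasSum_zeta_two)).tendsto_sum_nat
  have t3 := ((hasSum_half (by norm_num) hZ).sub
    (hasSum_shift (by norm_num) hZ)).tendsto_sum_nat
  have t := (log_tendsto s hs (by linarith)).sub
    (((c1_tendsto.mul_const s).sub (t2.mul_const (s ^ 2 / 2))).add (t3.mul_const (s ^ 3 / 3)))
  have t' := t.abs
  have := le_of_tendsto' t' (b := C * s ^ 4) (fun N => ?_)
  · refine le_trans (le_of_eq ?_) this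
    congr 1
    ring
  · rw [Finset.sum_mul, Finset.sum_mul, Finset.sum_mul, ← Finset.sum_sub_distrib,
      ← Finset.sum_add_distrib, ← Finset.sum_sub_distrib]
    refine (Finset.abs_sum_le_sum_abs _ _).trans ?_
    have hb := sum_le_hasSum (Finset.range N) (fun k _ => by positivity) hC
    refine le_trans ?_ (mul_le_mul_of_nonneg_right hb (by positivity : 0 ≤ s ^ 4))
    rw [Finset.sum_mul]
    refine Finset.sum_le_sum (fun k _ => ?_)
    have hp : 1 / ((k : ℝ) + 1 / 2) ≤ 2 := by
      rw [div_le_iff₀ (by positivity)]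
      linarith [(Nat.cast_nonneg k : (0 : ℝ) ≤ k)]
    have hq : 1 / ((k : ℝ) + 1) ≤ 1 := by
      rw [div_le_iff₀ (by positivity)]
      linarith [(Nat.cast_nonneg k : (0 : ℝ) ≤ k)]
    have hp0 : 0 ≤ 1 / ((k : ℝ) + 1 / 2) := by positivity
    have hq0 : 0 ≤ 1 / ((k : ℝ) + 1) := by positivity
    unfold uu
    generalize 1 / ((k : ℝ) + 1 / 2) = p at *
    generalize 1 / ((k : ℝ) + 1) = q at *
    have b1 := log_taylor (s * p) (by positivity) (by nlinarith)
    have b2 := log_taylor (s * q) (by positivity) (by nlinarith)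
    rw [abs_le] at *
    constructor <;> nlinarith [b1.1, b1.2, b2.1, b2.2]

lemma series_expansion : ∃ A1 A2 C : ℝ, ∀ s : ℝ, 0 < s → s ≤ 1 / 4 →
    |s * FF s - (1 + A1 * s + A2 * s ^ 2 + (∑' n : ℕ, aa (n + 1) / ((n : ℝ) + 1) ^ 3) * s ^ 3)|
      ≤ C * s ^ 4 := by
  have S1 := aa_summable_succ 0 le_rfl
  simp only [add_zero] at S1
  have S2 : Summable (fun n : ℕ => aa (n + 1) / ((n : ℝ) + 1) ^ 2) := by
    refine Summable.of_nonneg_of_le (fun n => ?_) (fun n => ?_) S1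
    · have := aa_pos (n + 1); positivity
    · have := aa_pos (n + 1)
      have hn : (0 : ℝ) ≤ n := by positivity
      exact div_le_div_of_nonneg_left this.le (by positivity) (by nlinarith)
  have S3 : Summable (fun n : ℕ => aa (n + 1) / ((n : ℝ) + 1) ^ 3) := by
    refine Summable.of_nonneg_of_le (fun n => ?_) (fun n => ?_) S2
    · have := aa_pos (n + 1); positivity
    · have := aa_pos (n + 1)
      have hn : (0 : ℝ) ≤ n := by positivity
      exact div_le_div_of_nonneg_left this.le (by positivity)
        (pow_le_pow_right₀ (by linarith) (by norm_num))
  refine ⟨∑' n : ℕ, aa (n + 1) / ((n : ℝ) + 1), - ∑' n : ℕ, aa (n + 1) / ((n : ℝ) + 1) ^ 2,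
    ∑' n : ℕ, aa (n + 1) / ((n : ℝ) + 1) ^ 3, fun s hs hs4 => ?_⟩
  have hF : FF s = 1 / s + ∑' n : ℕ, aa (n + 1) / ((n : ℝ) + 1 + s) := by
    unfold FF
    rw [(aa_summable s hs).tsum_eq_zero_add]
    simp [aa_zero]
  have hS := (aa_summable_succ s hs.le)
  have hd := ((hS.hasSum.sub S1.hasSum).add (S2.hasSum.mul_right s)).sub
    (S3.hasSum.mul_right (s ^ 2))
  have lo : ∀ n : ℕ, aa (n + 1) / ((n : ℝ) + 1 + s) - aa (n + 1) / ((n : ℝ) + 1)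
      + aa (n + 1) / ((n : ℝ) + 1) ^ 2 * s - aa (n + 1) / ((n : ℝ) + 1) ^ 3 * s ^ 2
      = - (aa (n + 1) / ((n : ℝ) + 1) ^ 3 * s ^ 3 / ((n : ℝ) + 1 + s)) := by
    intro n
    field_simp
    ring
  simp only [lo] at hd
  have l1 := hd.nonpos (fun n => by
    have := aa_pos (n + 1)
    simp only [Left.neg_nonpos_iff]; positivity)
  have l2 := hasSum_le (fun n => by
    have := aa_pos (n + 1)
    have hn : (0 : ℝ) ≤ n := by positivity
    show - (aa (n + 1) / ((n : ℝ) + 1) ^ 3 * s ^ 3) ≤ _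
    rw [neg_le_neg_iff]
    exact div_le_self (by positivity) (by linarith)) (S3.hasSum.mul_right (s ^ 3)).neg hd
  rw [hF, mul_add, mul_one_div_cancel hs.ne']
  generalize (∑' n : ℕ, aa (n + 1) / ((n : ℝ) + 1 + s)) = X at *
  generalize (∑' n : ℕ, aa (n + 1) / ((n : ℝ) + 1)) = A1 at *
  generalize (∑' n : ℕ, aa (n + 1) / ((n : ℝ) + 1) ^ 2) = A2 at *
  generalize (∑' n : ℕ, aa (n + 1) / ((n : ℝ) + 1) ^ 3) = A3 at *
  have l1' := mul_le_mul_of_nonneg_left l1 hs.le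
  have l2' := mul_le_mul_of_nonneg_left l2 hs.le
  have hA : 0 ≤ A3 * s ^ 4 := by nlinarith
  rw [abs_le]
  constructor <;> nlinarith

lemma cubic_zero (d1 d2 d3 : ℝ)
    (h : (fun s : ℝ => d1 * s + d2 * s ^ 2 + d3 * s ^ 3) =O[𝓝[>] 0] (fun s => s ^ 4)) :
    d3 = 0 := by
  have aux : ∀ (n : ℕ) (f : ℝ → ℝ), Continuous f →
      ((fun s : ℝ => s ^ n * f s) =O[𝓝[>] 0] (fun s => s ^ n * s)) → f 0 = 0 := by
    intro n f hf hO
    have h1 : f =O[𝓝[>] 0] (fun s : ℝ => s) := by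
      rw [isBigO_iff] at hO ⊢
      obtain ⟨c, hc⟩ := hO
      refine ⟨c, ?_⟩
      filter_upwards [hc, self_mem_nhdsWithin] with s hs hpos
      have hpos : 0 < s := hpos
      rw [norm_mul, norm_mul] at hs
      have : 0 < ‖s ^ n‖ := by rw [norm_pos_iff]; positivity
      refine le_of_mul_le_mul_left ?_ this
      linarith
    have h2 : Tendsto f (𝓝[>] 0) (𝓝 0) :=
      h1.trans_tendsto (tendsto_id.mono_left nhdsWithin_le_nhds)
    exact tendsto_nhds_unique (hf.continuousWithinAt.tendsto) h2
  have lower : ∀ n : ℕ, n ≤ 3 → (fun s : ℝ => s ^ 4) =O[𝓝[>] 0] (fun s : ℝ => s ^ n * s) := by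
    intro n hn
    have hc : Tendsto (fun s : ℝ => s ^ (3 - n)) (𝓝[>] 0) (𝓝 (0 ^ (3 - n))) :=
      (continuous_pow (3 - n)).continuousWithinAt.tendsto
    have := (hc.isBigO_one ℝ).mul (isBigO_refl (fun s : ℝ => s ^ n * s) (𝓝[>] 0))
    refine this.congr (fun s => ?_) (fun s => by ring)
    rw [← mul_assoc, ← pow_add, ← pow_succ]
    congr 1
    omega
  have e1 : d1 = 0 := by
    have := aux 1 (fun s => d1 + d2 * s + d3 * s ^ 2) (by fun_prop)
      ((h.congr_left (fun s => by ring)).trans (lower 1 (by norm_num)))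
    simpa using this
  subst e1
  have e2 : d2 = 0 := by
    have := aux 2 (fun s => d2 + d3 * s) (by fun_prop)
      ((h.congr_left (fun s => by ring)).trans (lower 2 (by norm_num)))
    simpa using this
  subst e2
  have := aux 3 (fun s => d3) (by fun_prop)
      ((h.congr_left (fun s => by ring)).trans (lower 3 (by norm_num)))
  simpa using this

lemma coeff_match (H : ℝ → ℝ) (hH : ∀ s, 0 < s → 0 < H s) (A1 A2 A3 C c1 c2 c3 D : ℝ)
    (h1 : ∀ s : ℝ, 0 < s → s ≤ 1 / 4 →
      |H s - (1 + A1 * s + A2 * s ^ 2 + A3 * s ^ 3)| ≤ C * s ^ 4)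
    (h2 : ∀ s : ℝ, 0 < s → s ≤ 1 / 4 →
      |Real.log (H s) - (c1 * s + c2 * s ^ 2 + c3 * s ^ 3)| ≤ D * s ^ 4) :
    A3 = c3 + c1 * c2 + c1 ^ 3 / 6 := by
  have ev : ∀ᶠ s : ℝ in 𝓝[>] 0, 0 < s ∧ s ≤ 1 / 4 := by
    filter_upwards [Ioc_mem_nhdsGT (show (0 : ℝ) < 1 / 4 by norm_num)] with s hs using hs
  have t0 : Tendsto (fun s : ℝ => s) (𝓝[>] 0) (𝓝 0) := tendsto_id.mono_left nhdsWithin_le_nhds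
  have O1 : (fun s => H s - (1 + A1 * s + A2 * s ^ 2 + A3 * s ^ 3)) =O[𝓝[>] 0]
      (fun s => s ^ 4) := by
    refine IsBigO.of_bound C ?_
    filter_upwards [ev] with s hs
    rw [Real.norm_eq_abs, Real.norm_eq_abs, abs_of_pos (pow_pos hs.1 4)]
    exact h1 s hs.1 hs.2
  have O2 : (fun s => Real.log (H s) - (c1 * s + c2 * s ^ 2 + c3 * s ^ 3)) =O[𝓝[>] 0]
      (fun s => s ^ 4) := by
    refine IsBigO.of_bound D ?_
    filter_upwards [ev] with s hs
    rw [Real.norm_eq_abs, Real.norm_eq_abs, abs_of_pos (pow_pos hs.1 4)]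
    exact h2 s hs.1 hs.2
  set P : ℝ → ℝ := fun s => c1 * s + c2 * s ^ 2 + c3 * s ^ 3 with hP
  set x : ℝ → ℝ := fun s => Real.log (H s) with hx
  have bdd : ∀ f : ℝ → ℝ, Continuous f → f =O[𝓝[>] 0] (fun _ => (1 : ℝ)) := fun f hf =>
    (hf.continuousWithinAt.tendsto (s := Set.Ioi 0) (x := 0)).isBigO_one ℝ
  have OP : P =O[𝓝[>] 0] (fun s => s) := by
    have := (bdd (fun s => c1 + c2 * s + c3 * s ^ 2) (by fun_prop)).mul (isBigO_refl (fun s : ℝ => s) (𝓝[>] 0))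
    refine this.congr (fun s => ?_) (fun s => ?_)
    · simp only [hP]; ring
    · ring
  have s4 : (fun s : ℝ => s ^ 4) =O[𝓝[>] 0] (fun s => s) := by
    have := (bdd (fun s => s ^ 3) (by fun_prop)).mul (isBigO_refl (fun s : ℝ => s) (𝓝[>] 0))
    exact this.congr (fun s => by ring) (fun s => by ring)
  have Ox : x =O[𝓝[>] 0] (fun s => s) :=
    ((O2.trans s4).add OP).congr_left (fun s => by simp [hP, hx])
  have O1' : (fun s : ℝ => s) =O[𝓝[>] 0] (fun _ => (1 : ℝ)) := bdd _ continuous_id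
  have Ox1 := Ox.trans O1'
  have OP1 := OP.trans O1'
  have xt : Tendsto x (𝓝[>] 0) (𝓝 0) := Ox.trans_tendsto t0
  have Oe := (Real.exp_sub_sum_range_isBigO_pow 4).comp_tendsto xt
  have Oe2 : (fun s => H s - (1 + x s + x s ^ 2 / 2 + x s ^ 3 / 6)) =O[𝓝[>] 0]
      (fun s => s ^ 4) := by
    refine (Oe.trans (Ox.pow 4)).congr' ?_ (EventuallyEq.refl _ _)
    filter_upwards [ev] with s hs
    simp only [Function.comp, hx, Real.exp_log (hH s hs.1), Finset.sum_range_succ,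
      Finset.sum_range_zero]
    norm_num [Nat.factorial]
  have Od : (fun s => (x s - P s) * (1 + (x s + P s) / 2 + (x s ^ 2 + x s * P s + P s ^ 2) / 6))
      =O[𝓝[>] 0] (fun s => s ^ 4) := by
    have hb : (fun s => 1 + (x s + P s) * (1 / 2) + (x s ^ 2 + x s * P s + P s ^ 2) * (1 / 6))
      =O[𝓝[>] 0] (fun _ => (1 : ℝ)) := by
      have hc := fun c : ℝ => isBigO_refl (fun _ : ℝ => (1 : ℝ)) (𝓝[>] (0 : ℝ))
      have m : ∀ {f g : ℝ → ℝ}, f =O[𝓝[>] 0] (fun _ => (1 : ℝ)) → g =O[𝓝[>] 0] (fun _ => (1 : ℝ)) →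
          (fun s => f s * g s) =O[𝓝[>] 0] (fun _ => (1 : ℝ)) := fun hf hg => by
        simpa using hf.mul hg
      have k : ∀ c : ℝ, (fun _ : ℝ => c) =O[𝓝[>] 0] (fun _ => (1 : ℝ)) :=
        fun c => bdd _ continuous_const
      have := ((k 1).add (m (Ox1.add OP1) (k (1 / 2)))).add
        (m (((m Ox1 Ox1).add (m Ox1 OP1)).add (m OP1 OP1)) (k (1 / 6)))
      exact this.congr_left (fun s => by ring)
    have := O2.mul hb
    exact this.congr (fun s => by simp only [hP, hx]; ring) (fun s => by ring)
  have Opoly : (fun s : ℝ => s ^ 4 * ((c2 ^ 2 + 2 * c1 * c3) / 2 + c1 ^ 2 * c2 / 2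
      + s * (c2 * c3 + (c1 ^ 2 * c3 + c1 * c2 ^ 2) / 2)
      + s ^ 2 * (c3 ^ 2 / 2 + (c2 ^ 3 + 6 * c1 * c2 * c3) / 6)
      + s ^ 3 * ((c1 * c3 ^ 2 + c2 ^ 2 * c3) / 2) + s ^ 4 * (c2 * c3 ^ 2 / 2)
      + s ^ 5 * (c3 ^ 3 / 6))) =O[𝓝[>] 0] (fun s => s ^ 4) := by
    have := (isBigO_refl (fun s : ℝ => s ^ 4) (𝓝[>] 0)).mul (bdd (fun s : ℝ =>
      ((c2 ^ 2 + 2 * c1 * c3) / 2 + c1 ^ 2 * c2 / 2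
      + s * (c2 * c3 + (c1 ^ 2 * c3 + c1 * c2 ^ 2) / 2)
      + s ^ 2 * (c3 ^ 2 / 2 + (c2 ^ 3 + 6 * c1 * c2 * c3) / 6)
      + s ^ 3 * ((c1 * c3 ^ 2 + c2 ^ 2 * c3) / 2) + s ^ 4 * (c2 * c3 ^ 2 / 2)
      + s ^ 5 * (c3 ^ 3 / 6))) (by fun_prop))
    exact this.congr (fun s => rfl) (fun s => by ring)
  have fin := ((Oe2.sub O1).add Od).add Opoly
  have := cubic_zero (A1 - c1) (A2 - c2 - c1 ^ 2 / 2) (A3 - (c3 + c1 * c2 + c1 ^ 3 / 6))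
    (fin.congr_left (fun s => by simp only [hP]; ring))
  linarith

/-- ∑_{n=1}^∞ C(2n,n)/(4ⁿ·n³) = 2·ζ(3) - (1/3)·π²·log 2 + (4/3)·log³2. -/
theorem centralBinom_inv_ncube_sum :
    ((∑' n : ℕ, (Nat.centralBinom (n + 1) : ℝ) /
        ((4 : ℝ) ^ (n + 1) * ((n : ℝ) + 1) ^ 3) : ℝ) : ℂ) =
      2 * riemannZeta 3 - (1 / 3) * (Real.pi : ℂ) ^ 2 * (Real.log 2 : ℂ)
        + (4 / 3) * (Real.log 2 : ℂ) ^ 3 := by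
  have hZ : HasSum (fun n : ℕ => (1 : ℝ) / (n : ℝ) ^ 3) (∑' n : ℕ, (1 : ℝ) / (n : ℝ) ^ 3) :=
    (Real.summable_one_div_nat_pow.2 (by norm_num)).hasSum
  have hz : riemannZeta 3 = ((∑' n : ℕ, (1 : ℝ) / (n : ℝ) ^ 3 : ℝ) : ℂ) := by
    have := zeta_nat_eq_tsum_of_gt_one (k := 3) (by norm_num)
    push_cast at this ⊢
    exact this
  rw [hz]
  generalize (∑' n : ℕ, (1 : ℝ) / (n : ℝ) ^ 3) = Z at *
  obtain ⟨D, hD⟩ := log_expansion Z hZ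
  obtain ⟨A1, A2, C, hC⟩ := series_expansion
  have key := coeff_match (fun s => s * FF s) (fun s hs => mul_pos hs (FF_pos s hs)) A1 A2 _ C
    (2 * Real.log 2) (-(Real.pi ^ 2 / 6)) (2 * Z) D hC (fun s hs hs4 => by
      have := hD s hs hs4
      convert this using 3
      ring)
  have e : (∑' n : ℕ, (Nat.centralBinom (n + 1) : ℝ) / ((4 : ℝ) ^ (n + 1) * ((n : ℝ) + 1) ^ 3))
      = ∑' n : ℕ, aa (n + 1) / ((n : ℝ) + 1) ^ 3 := by
    refine tsum_congr (fun n => ?_)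
    unfold aa
    rw [div_div]
  rw [e, key]
  push_cast
  ring
end

section
/- ∑_{n=1}^∞ C(2n,n) / (4ⁿ · n⁴) = (1/40)·π⁴ - 4·ζ(3)·log 2 + (1/3)·π²·log²2 - (2/3)·log⁴2. -/
open Filter Topology Asymptotics

namespace CBSum

/-- normalized central binomial coefficient -/
noncomputable def c (n : ℕ) : ℝ := (Nat.centralBinom n : ℝ) / 4 ^ n

lemma c_zero : c 0 = 1 := by simp [c]

lemma c_pos (n : ℕ) : 0 < c n := by
  unfold c
  have : 0 < (Nat.centralBinom n : ℝ) := by exact_mod_cast Nat.centralBinom_pos n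
  positivity

lemma c_succ (n : ℕ) : ((n : ℝ) + 1) * c (n + 1) = (n + 1 / 2) * c n := by
  have h : ((n : ℝ) + 1) * (Nat.centralBinom (n + 1) : ℝ)
      = 2 * (2 * n + 1) * (Nat.centralBinom n : ℝ) := by
    exact_mod_cast Nat.succ_mul_centralBinom_succ n
  unfold c
  rw [← mul_div_assoc, h, pow_succ]
  field_simp
  ring

lemma c_succ' (n : ℕ) : c (n + 1) = (n + 1 / 2) / (n + 1) * c n := by
  have := c_succ n
  field_simp at this ⊢
  linarith

lemma c_sq (n : ℕ) : c n ^ 2 * (2 * n + 1) ≤ 1 := by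
  induction n with
  | zero => simp [c_zero]
  | succ n ih =>
    refine le_trans ?_ ih
    rw [c_succ', mul_pow, mul_comm (_ ^ 2) (c n ^ 2), mul_assoc]
    refine mul_le_mul_of_nonneg_left ?_ (sq_nonneg _)
    rw [div_pow, div_mul_eq_mul_div, div_le_iff₀ (by positivity)]
    push_cast
    have : (0 : ℝ) ≤ n := n.cast_nonneg
    nlinarith

lemma c_tendsto : Tendsto c atTop (𝓝 0) := by
  have h1 : Tendsto (fun n : ℕ => 1 / ((n : ℝ) + 1)) atTop (𝓝 0) :=
    tendsto_one_div_add_atTop_nhds_zero_nat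
  have h2 : Tendsto (fun n => c n ^ 2) atTop (𝓝 0) := by
    refine squeeze_zero (fun n => sq_nonneg _) (fun n => ?_) h1
    rw [le_div_iff₀ (by positivity)]
    refine le_trans ?_ (c_sq n)
    refine mul_le_mul_of_nonneg_left ?_ (sq_nonneg _)
    have : (0 : ℝ) ≤ n := n.cast_nonneg
    linarith
  have h3 := h2.sqrt
  simp only [Real.sqrt_zero] at h3
  refine h3.congr (fun n => Real.sqrt_sq (c_pos n).le)

lemma summable_c : Summable (fun n : ℕ => c (n + 1) / ((n : ℝ) + 1)) := by
  have key : ∀ N, ∑ n ∈ Finset.range N, c n / (2 * ((n : ℝ) + 1)) = 1 - c N := by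
    intro N
    induction N with
    | zero => simp [c_zero]
    | succ N ih =>
      rw [Finset.sum_range_succ, ih, c_succ']
      field_simp
      ring
  have h1 : Summable (fun n : ℕ => c n / (2 * ((n : ℝ) + 1))) := by
    refine summable_of_sum_range_le (c := 1) (fun n => ?_) (fun N => ?_)
    · have := c_pos n
      positivity
    · rw [key]; linarith [c_pos N]
  refine Summable.of_nonneg_of_le (fun n => ?_) (fun n => ?_) (h1.mul_left 2)
  · have := c_pos (n + 1)
    positivity
  · have h := c_pos n
    have h2 : c (n + 1) ≤ c n := by
      rw [c_succ']
      refine mul_le_of_le_one_left h.le ?_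
      rw [div_le_one (by positivity)]
      linarith
    calc c (n + 1) / ((n : ℝ) + 1) ≤ c n / (n + 1) := by gcongr
      _ = _ := by field_simp

lemma summable_of_le {f : ℕ → ℝ} (hf : ∀ n, 0 ≤ f n)
    (h : ∀ n, f n ≤ c (n + 1) / ((n : ℝ) + 1)) : Summable f :=
  Summable.of_nonneg_of_le hf h summable_c

lemma summable_pow (j : ℕ) : Summable (fun n : ℕ => c (n + 1) / ((n : ℝ) + 1) ^ (j + 1)) := by
  refine summable_of_le (fun n => ?_) (fun n => ?_)
  · have := c_pos (n + 1)
    positivity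
  · have := c_pos (n + 1)
    refine div_le_div_of_nonneg_left this.le (by positivity) ?_
    refine le_self_pow₀ ?_ (by omega)
    have : (0 : ℝ) ≤ n := n.cast_nonneg
    linarith

lemma summable_T {s : ℝ} (hs : 0 ≤ s) : Summable (fun n : ℕ => c (n + 1) / ((n : ℝ) + 1 + s)) := by
  refine summable_of_le (fun n => ?_) (fun n => ?_)
  · have := c_pos (n + 1)
    positivity
  · have := c_pos (n + 1)
    refine div_le_div_of_nonneg_left this.le (by positivity) (by linarith)

noncomputable def H (s : ℝ) : ℝ := 1 + s * ∑' n : ℕ, c (n + 1) / ((n : ℝ) + 1 + s)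

lemma H_rec {s : ℝ} (hs : 0 ≤ s) : (s + 1) * H s = (s + 1 / 2) * H (s + 1) := by
  have hs1 : 0 ≤ s + 1 := by linarith
  have e1 := (summable_T hs).hasSum
  have e2 := (summable_T hs1).hasSum
  have e3 := ((e2.mul_left (s + 1 / 2)).sub (e1.mul_left s)).tendsto_sum_nat
  have key : ∀ N : ℕ, ∑ n ∈ Finset.range N, ((s + 1 / 2) * (c (n + 1) / ((n : ℝ) + 1 + (s + 1)))
      - s * (c (n + 1) / ((n : ℝ) + 1 + s)))
      = 1 / 2 / (1 + s) - (N + 1) / (N + 1 + s) * c (N + 1) := by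
    intro N
    induction N with
    | zero =>
      have := c_succ' 0
      simp [c_zero] at this
      simp [this]
      ring
    | succ N ih =>
      rw [Finset.sum_range_succ, ih, c_succ' (N + 1)]
      push_cast
      have : (N : ℝ) + 1 + s ≠ 0 := by positivity
      have : (N : ℝ) + 1 + (s + 1) ≠ 0 := by positivity
      have : (N : ℝ) + 1 + 1 + s ≠ 0 := by positivity
      field_simp
      ring
  have e4 : Tendsto (fun N : ℕ => 1 / 2 / (1 + s) - ((N : ℝ) + 1) / (N + 1 + s) * c (N + 1)) atTop
      (𝓝 (1 / 2 / (1 + s) - 0)) := by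
    refine tendsto_const_nhds.sub ?_
    refine squeeze_zero (fun n => ?_) (fun n => ?_) ((tendsto_add_atTop_iff_nat 1).2 c_tendsto)
    · have := c_pos (n + 1)
      positivity
    · refine mul_le_of_le_one_left (c_pos _).le ?_
      rw [div_le_one (by positivity)]
      linarith
  have e5 := tendsto_nhds_unique e3 (e4.congr (fun N => (key N).symm))
  unfold H
  generalize (∑' n : ℕ, c (n + 1) / ((n : ℝ) + 1 + s)) = A at *
  generalize (∑' n : ℕ, c (n + 1) / ((n : ℝ) + 1 + (s + 1))) = B at *
  have : (1 + s) ≠ 0 := by positivity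
  field_simp at e5
  linear_combination (-1/2) * e5

lemma H_mono {s t : ℝ} (hs : 0 ≤ s) (hst : s ≤ t) : H s ≤ H t := by
  have ht := hs.trans hst
  unfold H
  rw [← tsum_mul_left, ← tsum_mul_left]
  refine add_le_add le_rfl (Summable.tsum_le_tsum (fun n => ?_) ((summable_T hs).mul_left _)
    ((summable_T ht).mul_left _))
  have := c_pos (n + 1)
  rw [← mul_div_assoc, ← mul_div_assoc, div_le_div_iff₀ (by positivity) (by positivity)]
  have h : 0 ≤ (t - s) * (c (n + 1) * (n + 1)) :=
    mul_nonneg (by linarith) (by positivity)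
  nlinarith

lemma H_zero : H 0 = 1 := by simp [H]

lemma H_pos {s : ℝ} (hs : 0 ≤ s) : 0 < H s := by
  have := H_mono le_rfl hs
  rw [H_zero] at this
  linarith

lemma H_prod {s : ℝ} (hs : 0 ≤ s) (N : ℕ) :
    Real.log (H s) = ∑ k ∈ Finset.range N, (Real.log (s + k + 1 / 2) - Real.log (s + k + 1))
      + Real.log (H (s + N)) := by
  induction N with
  | zero => simp
  | succ N ih =>
    have h0 : 0 ≤ s + N := by positivity
    have h := congrArg Real.log (H_rec h0)
    rw [Real.log_mul (by positivity) (H_pos h0).ne',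
      Real.log_mul (by positivity) (H_pos (by positivity)).ne'] at h
    rw [ih, Finset.sum_range_succ]
    push_cast
    rw [← add_assoc s]
    linarith

lemma log_ratio {s : ℝ} (hs : 0 ≤ s) (hs1 : s ≤ 1) :
    Tendsto (fun N : ℕ => Real.log (H (s + N)) - Real.log (H N)) atTop (𝓝 0) := by
  have hN : ∀ N : ℕ, (0 : ℝ) ≤ N := fun N => N.cast_nonneg
  have h1 : Tendsto (fun n : ℕ => 1 / ((n : ℝ) + 1)) atTop (𝓝 0) :=
    tendsto_one_div_add_atTop_nhds_zero_nat
  refine squeeze_zero (fun N => ?_) (fun N => ?_) h1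
  · have := Real.log_le_log (H_pos (hN N)) (H_mono (hN N) (by linarith : (N : ℝ) ≤ s + N))
    linarith
  · have h2 := Real.log_le_log (H_pos (by positivity))
      (H_mono (by positivity) (by linarith : s + (N : ℝ) ≤ N + 1))
    have h := congrArg Real.log (H_rec (hN N))
    rw [Real.log_mul (by positivity) (H_pos (hN N)).ne',
      Real.log_mul (by positivity) (H_pos (by positivity)).ne'] at h
    have h3 : Real.log ((N : ℝ) + 1) - Real.log (N + 1 / 2) ≤ 1 / (N + 1) := by
      rw [← Real.log_div (by positivity) (by positivity)]
      refine (Real.log_le_sub_one_of_pos (by positivity)).trans ?_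
      rw [div_sub_one (by positivity), div_le_div_iff₀ (by positivity) (by positivity)]
      have := hN N
      nlinarith
    linarith

lemma log_H_tendsto {s : ℝ} (hs : 0 ≤ s) (hs1 : s ≤ 1) :
    Tendsto (fun N : ℕ => ∑ k ∈ Finset.range N,
      (Real.log (1 + s / (k + 1 / 2)) - Real.log (1 + s / (k + 1)))) atTop
      (𝓝 (Real.log (H s))) := by
  have h := (tendsto_const_nhds (x := Real.log (H s))).sub (log_ratio hs hs1)
  rw [sub_zero] at h
  refine h.congr (fun N => ?_)
  have h1 := H_prod hs N
  have h2 := H_prod le_rfl N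
  rw [H_zero, Real.log_one] at h2
  simp only [zero_add] at h2
  have h3 : ∑ k ∈ Finset.range N,
      (Real.log (1 + s / (k + 1 / 2)) - Real.log (1 + s / (k + 1))) =
      ∑ k ∈ Finset.range N, (Real.log (s + k + 1 / 2) - Real.log (s + k + 1)) -
      ∑ k ∈ Finset.range N, (Real.log ((k : ℝ) + 1 / 2) - Real.log ((k : ℝ) + 1)) := by
    rw [← Finset.sum_sub_distrib]
    refine Finset.sum_congr rfl (fun k _ => ?_)
    have a1 : 1 + s / ((k : ℝ) + 1 / 2) = (s + k + 1 / 2) / (k + 1 / 2) := by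
      field_simp; ring
    have a2 : 1 + s / ((k : ℝ) + 1) = (s + k + 1) / (k + 1) := by
      field_simp; ring
    rw [a1, a2, Real.log_div (by positivity) (by positivity),
      Real.log_div (by positivity) (by positivity)]
    ring
  rw [h3]
  linarith

/-- differences of powers -/
noncomputable def D (j k : ℕ) : ℝ := 1 / ((k : ℝ) + 1 / 2) ^ j - 1 / ((k : ℝ) + 1) ^ j

lemma sum_D (j N : ℕ) : ∑ k ∈ Finset.range N, D j k =
    2 ^ j * ∑ k ∈ Finset.range (2 * N), 1 / ((k : ℝ) + 1) ^ j
      - 2 * ∑ k ∈ Finset.range N, 1 / ((k : ℝ) + 1) ^ j := by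
  induction N with
  | zero => simp
  | succ N ih =>
    rw [show 2 * (N + 1) = 2 * N + 1 + 1 by ring]
    simp only [Finset.sum_range_succ]
    rw [ih]
    have h1 : (2 : ℝ) ^ j * (1 / (((2 * N : ℕ) : ℝ) + 1) ^ j) = 1 / ((N : ℝ) + 1 / 2) ^ j := by
      rw [show (((2 * N : ℕ) : ℝ) + 1) = 2 * ((N : ℝ) + 1 / 2) by push_cast; ring, mul_pow]
      field_simp
    have h2 : (2 : ℝ) ^ j * (1 / (((2 * N + 1 : ℕ) : ℝ) + 1) ^ j) = 1 / ((N : ℝ) + 1) ^ j := by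
      rw [show (((2 * N + 1 : ℕ) : ℝ) + 1) = 2 * ((N : ℝ) + 1) by push_cast; ring, mul_pow]
      field_simp
    rw [mul_add, mul_add, h1, h2]
    unfold D
    ring

lemma two_mul_tendsto : Tendsto (fun N : ℕ => 2 * N) atTop atTop :=
  tendsto_id.const_mul_atTop' (by norm_num)

lemma tendsto_D_one : Tendsto (fun N => ∑ k ∈ Finset.range N, D 1 k) atTop
    (𝓝 (2 * Real.log 2)) := by
  have h := Real.tendsto_harmonic_sub_log
  have h2 := h.comp two_mul_tendsto
  have h3 := ((h2.sub h).const_mul 2).add_const (2 * Real.log 2)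
  rw [sub_self, mul_zero, zero_add] at h3
  refine h3.congr' ?_
  filter_upwards [eventually_gt_atTop 0] with N hN
  have hN' : (N : ℝ) ≠ 0 := by positivity
  have hh : ∀ M : ℕ, ((harmonic M : ℚ) : ℝ) = ∑ k ∈ Finset.range M, 1 / ((k : ℝ) + 1) ^ 1 := by
    intro M
    simp [harmonic]
  rw [sum_D, ← hh, ← hh]
  simp only [Function.comp]
  push_cast
  rw [Real.log_mul (by norm_num) hN']
  ring

lemma tendsto_D {j : ℕ} (hj : j ≠ 0) {z : ℝ} (hz : HasSum (fun n : ℕ => 1 / (n : ℝ) ^ j) z) :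
    Tendsto (fun N => ∑ k ∈ Finset.range N, D j k) atTop (𝓝 ((2 ^ j - 2) * z)) := by
  have h : HasSum (fun n : ℕ => 1 / ((n : ℝ) + 1) ^ j) z := by
    have := (hasSum_nat_add_iff' 1).2 hz
    simpa [hj] using this
  have h1 := h.tendsto_sum_nat
  have h2 := h1.comp two_mul_tendsto
  have h3 := (h2.const_mul (2 ^ j)).sub (h1.const_mul 2)
  rw [← sub_mul] at h3
  refine h3.congr (fun N => ?_)
  rw [sum_D]
  rfl

lemma log_bound {x : ℝ} (hx : 0 ≤ x) (hx1 : x ≤ 1 / 2) :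
    |Real.log (1 + x) - (x - x ^ 2 / 2 + x ^ 3 / 3 - x ^ 4 / 4)| ≤ 2 * x ^ 5 := by
  have h := Real.abs_log_sub_add_sum_range_le (x := -x)
    (by rw [abs_neg, abs_of_nonneg hx]; linarith) 4
  rw [abs_neg, abs_of_nonneg hx] at h
  simp only [Finset.sum_range_succ, Finset.sum_range_zero] at h
  have h2 : x ^ (4 + 1) / (1 - x) ≤ 2 * x ^ 5 := by
    rw [div_le_iff₀ (by linarith)]
    have : 0 ≤ x ^ 5 := by positivity
    norm_num
    nlinarith
  refine le_trans (le_of_eq ?_) (h.trans h2)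
  congr 1
  push_cast
  rw [sub_neg_eq_add]
  ring

lemma log_H_bound {z2 z3 z4 : ℝ} (h2 : HasSum (fun n : ℕ => 1 / (n : ℝ) ^ 2) z2)
    (h3 : HasSum (fun n : ℕ => 1 / (n : ℝ) ^ 3) z3)
    (h4 : HasSum (fun n : ℕ => 1 / (n : ℝ) ^ 4) z4) :
    ∃ K : ℝ, ∀ s : ℝ, 0 ≤ s → s ≤ 1 / 4 →
      |Real.log (H s) - (2 * Real.log 2 * s + (-z2) * s ^ 2 + 2 * z3 * s ^ 3
        + (-(7 / 2) * z4) * s ^ 4)| ≤ K * s ^ 5 := by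
  have h5 : Summable (fun n : ℕ => 1 / ((n : ℝ) + 1 / 2) ^ 5) := by
    have a : Summable (fun n : ℕ => 1 / (n : ℝ) ^ 5) :=
      Real.summable_one_div_nat_pow.2 (by norm_num)
    have a' : Summable (fun n : ℕ => 1 / ((n : ℝ) + 1) ^ 5) := by
      simpa using (summable_nat_add_iff 1).2 a
    refine Summable.of_nonneg_of_le (fun n => by positivity) (fun n => ?_) (a'.mul_left (2 ^ 5))
    rw [show (2 : ℝ) ^ 5 * (1 / ((n : ℝ) + 1) ^ 5) = 1 / (((n : ℝ) + 1) / 2) ^ 5 by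
      rw [div_pow]; field_simp]
    have : (0 : ℝ) ≤ n := n.cast_nonneg
    refine one_div_le_one_div_of_le (by positivity) ?_
    gcongr
    linarith
  refine ⟨4 * ∑' n : ℕ, 1 / ((n : ℝ) + 1 / 2) ^ 5, fun s hs hs4 => ?_⟩
  have t := log_H_tendsto hs (by linarith)
  have tP := (((tendsto_D_one.mul_const s).sub
    ((tendsto_D (by norm_num) h2).mul_const (s ^ 2 / 2))).add
    ((tendsto_D (by norm_num) h3).mul_const (s ^ 3 / 3))).sub
    ((tendsto_D (by norm_num) h4).mul_const (s ^ 4 / 4))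
  have tt := (t.sub tP).abs
  have e : Real.log (H s) - (2 * Real.log 2 * s + (-z2) * s ^ 2 + 2 * z3 * s ^ 3
        + (-(7 / 2) * z4) * s ^ 4) = Real.log (H s) - (2 * Real.log 2 * s
        - (2 ^ 2 - 2) * z2 * (s ^ 2 / 2) + (2 ^ 3 - 2) * z3 * (s ^ 3 / 3)
        - (2 ^ 4 - 2) * z4 * (s ^ 4 / 4)) := by ring
  rw [e]
  refine le_of_tendsto' tt (fun N => ?_)
  have hsum := h5.sum_le_tsum (Finset.range N) (fun n _ => by positivity)
  simp only [Finset.sum_mul]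
  rw [← Finset.sum_sub_distrib, ← Finset.sum_add_distrib, ← Finset.sum_sub_distrib,
    ← Finset.sum_sub_distrib]
  refine (Finset.abs_sum_le_sum_abs _ _).trans ?_
  have hterm : ∀ k ∈ Finset.range N,
      |Real.log (1 + s / (k + 1 / 2)) - Real.log (1 + s / (k + 1)) -
        (D 1 k * s - D 2 k * (s ^ 2 / 2) + D 3 k * (s ^ 3 / 3) - D 4 k * (s ^ 4 / 4))|
      ≤ 4 * s ^ 5 * (1 / ((k : ℝ) + 1 / 2) ^ 5) := by
    intro k _
    have hk : (0 : ℝ) ≤ k := k.cast_nonneg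
    have x1 : s / ((k : ℝ) + 1 / 2) ≤ 1 / 2 := by
      rw [div_le_iff₀ (by positivity)]; linarith
    have x2 : s / ((k : ℝ) + 1) ≤ s / ((k : ℝ) + 1 / 2) := by
      gcongr; norm_num
    have x0 : 0 ≤ s / ((k : ℝ) + 1) := by positivity
    have b1 := log_bound (by positivity) x1
    have b2 := log_bound x0 (x2.trans x1)
    have x3 : (s / ((k : ℝ) + 1)) ^ 5 ≤ (s / ((k : ℝ) + 1 / 2)) ^ 5 := by gcongr
    have x4 : 4 * s ^ 5 * (1 / ((k : ℝ) + 1 / 2) ^ 5) = 4 * (s / ((k : ℝ) + 1 / 2)) ^ 5 := by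
      rw [div_pow]; ring
    rw [x4]
    have := abs_sub _ _ |>.trans (add_le_add b1 b2)
    refine le_trans (le_of_eq ?_) (this.trans (by linarith))
    congr 1
    unfold D
    simp only [div_pow]
    ring
  refine (Finset.sum_le_sum hterm).trans ?_
  rw [← Finset.mul_sum]
  have : 0 ≤ s ^ 5 := by positivity
  nlinarith

lemma H_bound :
    ∃ K : ℝ, ∀ s : ℝ, 0 ≤ s → 
      |H s - (1 + (∑' n : ℕ, c (n + 1) / ((n : ℝ) + 1) ^ 1) * s
        - (∑' n : ℕ, c (n + 1) / ((n : ℝ) + 1) ^ 2) * s ^ 2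
        + (∑' n : ℕ, c (n + 1) / ((n : ℝ) + 1) ^ 3) * s ^ 3
        - (∑' n : ℕ, c (n + 1) / ((n : ℝ) + 1) ^ 4) * s ^ 4)| ≤ K * s ^ 5 := by
  refine ⟨∑' n : ℕ, c (n + 1) / ((n : ℝ) + 1) ^ 5, fun s hs => ?_⟩
  have e := (((((summable_T hs).hasSum.mul_left s).sub
    ((summable_pow 0).hasSum.mul_right s)).add
    ((summable_pow 1).hasSum.mul_right (s ^ 2))).sub
    ((summable_pow 2).hasSum.mul_right (s ^ 3))).add
    ((summable_pow 3).hasSum.mul_right (s ^ 4))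
  have e5 := (summable_pow 4).hasSum.mul_right (s ^ 5)
  have hb : ∀ n : ℕ, s * (c (n + 1) / ((n : ℝ) + 1 + s)) - c (n + 1) / ((n : ℝ) + 1) ^ (0 + 1) * s
      + c (n + 1) / ((n : ℝ) + 1) ^ (1 + 1) * s ^ 2 - c (n + 1) / ((n : ℝ) + 1) ^ (2 + 1) * s ^ 3
      + c (n + 1) / ((n : ℝ) + 1) ^ (3 + 1) * s ^ 4
      = c (n + 1) * s ^ 5 / (((n : ℝ) + 1) ^ 4 * ((n : ℝ) + 1 + s)) := by
    intro n
    field_simp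
    ring
  have lo := e.nonneg (fun n => by
    rw [hb]
    have := c_pos (n + 1)
    positivity)
  have hi := hasSum_le (fun n => by
    rw [hb, div_mul_eq_mul_div]
    have := c_pos (n + 1)
    refine div_le_div_of_nonneg_left (by positivity) (by positivity) ?_
    rw [pow_succ _ 4]
    exact mul_le_mul_of_nonneg_left (by linarith) (by positivity)) e e5
  norm_num only at lo hi
  unfold H
  rw [abs_le]
  constructor <;> linarith

lemma exp_expand (a b c d : ℝ) :
    (fun s : ℝ => (∑ m ∈ Finset.range 5,
      (a * s + b * s ^ 2 + c * s ^ 3 + d * s ^ 4) ^ m / (m.factorial : ℝ))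
      - (1 + a * s + (b + a ^ 2 / 2) * s ^ 2 + (c + a * b + a ^ 3 / 6) * s ^ 3
        + (d + a * c + b ^ 2 / 2 + a ^ 2 * b / 2 + a ^ 4 / 24) * s ^ 4))
      =O[𝓝[>] (0 : ℝ)] (fun s => s ^ 5) := by
  have hR : (fun s : ℝ => (1 / 2 * (2 * a * d + 2 * b * c + (c ^ 2 + 2 * b * d) * s
      + 2 * c * d * s ^ 2 + d ^ 2 * s ^ 3)
      + 1 / 6 * (3 * a ^ 2 * (c + d * s) + 3 * a * (b + c * s + d * s ^ 2) ^ 2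
        + s * (b + c * s + d * s ^ 2) ^ 3)
      + 1 / 24 * ((b + c * s + d * s ^ 2) * (4 * a ^ 3 + 6 * a ^ 2 * s * (b + c * s + d * s ^ 2)
        + 4 * a * s ^ 2 * (b + c * s + d * s ^ 2) ^ 2 + s ^ 3 * (b + c * s + d * s ^ 2) ^ 3))))
      =O[𝓝[>] (0 : ℝ)] (fun _ => (1 : ℝ)) := by
    refine Tendsto.isBigO_one ℝ (tendsto_nhdsWithin_of_tendsto_nhds
      (Continuous.tendsto (by fun_prop) 0))
  have h := (isBigO_refl (fun s : ℝ => s ^ 5) (𝓝[>] (0 : ℝ))).mul hR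
  refine (h.congr_left (fun s => ?_)).congr_right (fun s => by ring)
  simp [Finset.sum_range_succ, Nat.factorial]
  ring

lemma step {a : ℝ} {f : ℝ → ℝ} (hf : Continuous f) {k : ℕ}
    (h : (fun s => a + s * f s) =O[𝓝[>] (0 : ℝ)] (fun s => s ^ (k + 1))) :
    a = 0 ∧ f =O[𝓝[>] (0 : ℝ)] (fun s => s ^ k) := by
  have h1 : Tendsto (fun s : ℝ => a + s * f s) (𝓝[>] 0) (𝓝 (a + 0 * f 0)) :=
    tendsto_nhdsWithin_of_tendsto_nhds (Continuous.tendsto (by fun_prop) 0)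
  have h2 : Tendsto (fun s : ℝ => s ^ (k + 1)) (𝓝[>] 0) (𝓝 (0 ^ (k + 1))) :=
    tendsto_nhdsWithin_of_tendsto_nhds (Continuous.tendsto (by fun_prop) 0)
  rw [zero_pow (by omega)] at h2
  have h3 := tendsto_nhds_unique h1 (h.trans_tendsto h2)
  have ha : a = 0 := by simpa using h3
  refine ⟨ha, ?_⟩
  have h4 := (isBigO_refl (fun s : ℝ => s⁻¹) (𝓝[>] (0 : ℝ))).mul h
  refine h4.congr' ?_ ?_
  · filter_upwards [self_mem_nhdsWithin] with s hs
    have : s ≠ 0 := ne_of_gt hs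
    rw [ha]
    field_simp
    ring
  · filter_upwards [self_mem_nhdsWithin] with s hs
    have : s ≠ 0 := ne_of_gt hs
    rw [pow_succ]
    field_simp

lemma coeff_four {e0 e1 e2 e3 e4 : ℝ}
    (h : (fun s : ℝ => e0 + e1 * s + e2 * s ^ 2 + e3 * s ^ 3 + e4 * s ^ 4)
      =O[𝓝[>] (0 : ℝ)] (fun s => s ^ 5)) : e4 = 0 := by
  have h0 := (step (a := e0) (f := fun s => e1 + s * (e2 + s * (e3 + s * (e4 + s * 0))))
    (by fun_prop) (k := 4) (h.congr_left (fun s => by ring))).2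
  have h1 := (step (by fun_prop) h0).2
  have h2 := (step (by fun_prop) h1).2
  have h3 := (step (by fun_prop) h2).2
  exact (step (by fun_prop) h3).1

lemma isBigO_of_bound {f : ℝ → ℝ} {K δ : ℝ} (hδ : 0 < δ)
    (h : ∀ s : ℝ, 0 ≤ s → s ≤ δ → |f s| ≤ K * s ^ 5) :
    f =O[𝓝[>] (0 : ℝ)] (fun s => s ^ 5) := by
  refine IsBigO.of_bound K ?_
  filter_upwards [Ioc_mem_nhdsGT hδ] with s hs
  have h0 : 0 ≤ s := hs.1.le
  rw [Real.norm_eq_abs, Real.norm_eq_abs, abs_of_nonneg (by positivity : 0 ≤ s ^ 5)]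
  exact h s h0 hs.2

lemma main_real {z2 z3 z4 : ℝ} (h2 : HasSum (fun n : ℕ => 1 / (n : ℝ) ^ 2) z2)
    (h3 : HasSum (fun n : ℕ => 1 / (n : ℝ) ^ 3) z3)
    (h4 : HasSum (fun n : ℕ => 1 / (n : ℝ) ^ 4) z4) :
    ∑' n : ℕ, c (n + 1) / ((n : ℝ) + 1) ^ 4 =
      7 / 2 * z4 - z2 ^ 2 / 2 - 4 * z3 * Real.log 2 + 2 * z2 * Real.log 2 ^ 2
        - 2 / 3 * Real.log 2 ^ 4 := by
  obtain ⟨K1, hK1⟩ := log_H_bound h2 h3 h4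
  obtain ⟨K2, hK2⟩ := H_bound
  have o1 := isBigO_of_bound (by norm_num) hK1
  have o2 := isBigO_of_bound one_pos (fun s hs _ => hK2 s hs)
  set P : ℝ → ℝ := fun s => 2 * Real.log 2 * s + (-z2) * s ^ 2 + 2 * z3 * s ^ 3
        + (-(7 / 2) * z4) * s ^ 4 with hP
  set y : ℝ → ℝ := fun s => Real.log (H s) with hy
  have o1' : (fun s => y s - P s) =O[𝓝[>] (0 : ℝ)] (fun s => s ^ 5) := o1
  have hPs : P =O[𝓝[>] (0 : ℝ)] (fun s => s) := by
    have hR : (fun s : ℝ => 2 * Real.log 2 + (-z2) * s + 2 * z3 * s ^ 2 + (-(7 / 2) * z4) * s ^ 3)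
        =O[𝓝[>] (0 : ℝ)] (fun _ => (1 : ℝ)) :=
      Tendsto.isBigO_one ℝ (tendsto_nhdsWithin_of_tendsto_nhds
        (Continuous.tendsto (by fun_prop) 0))
    have h := (isBigO_refl (fun s : ℝ => s) (𝓝[>] (0 : ℝ))).mul hR
    exact (h.congr_left (fun s => by simp only [hP]; ring)).congr_right (fun s => by ring)
  have h51 : (fun s : ℝ => s ^ 5) =O[𝓝[>] (0 : ℝ)] (fun s => s) := by
    have hR : (fun s : ℝ => s ^ 4) =O[𝓝[>] (0 : ℝ)] (fun _ => (1 : ℝ)) :=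
      Tendsto.isBigO_one ℝ (tendsto_nhdsWithin_of_tendsto_nhds
        (Continuous.tendsto (by fun_prop) 0))
    have h := (isBigO_refl (fun s : ℝ => s) (𝓝[>] (0 : ℝ))).mul hR
    exact (h.congr_left (fun s => by ring)).congr_right (fun s => by ring)
  have hys : y =O[𝓝[>] (0 : ℝ)] (fun s => s) :=
    ((o1'.trans h51).add hPs).congr_left (fun s => by ring)
  have hs0 : Tendsto (fun s : ℝ => s) (𝓝[>] 0) (𝓝 0) :=
    tendsto_nhdsWithin_of_tendsto_nhds tendsto_id
  have hy0 : Tendsto y (𝓝[>] 0) (𝓝 0) := hys.trans_tendsto hs0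
  have hP0 : Tendsto P (𝓝[>] 0) (𝓝 0) := hPs.trans_tendsto hs0
  have hyb : y =O[𝓝[>] (0 : ℝ)] (fun _ => (1 : ℝ)) := hy0.isBigO_one ℝ
  have hPb : P =O[𝓝[>] (0 : ℝ)] (fun _ => (1 : ℝ)) := hP0.isBigO_one ℝ
  -- exponential
  have o3 : (fun s => H s - ∑ m ∈ Finset.range 5, y s ^ m / (m.factorial : ℝ))
      =O[𝓝[>] (0 : ℝ)] (fun s => s ^ 5) := by
    refine IsBigO.trans (IsBigO.of_bound (((Nat.succ 5 : ℕ) : ℝ) / ((Nat.factorial 5 : ℝ) * (5 : ℕ)))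
      ?_) (hys.pow 5)
    have hle : ∀ᶠ s in 𝓝[>] (0 : ℝ), |y s| ≤ 1 := by
      have := hy0.abs
      rw [abs_zero] at this
      exact this.eventually_le_const one_pos
    filter_upwards [hle, self_mem_nhdsWithin] with s h1 hs
    have hb := Real.exp_bound h1 (n := 5) (by norm_num)
    have he : Real.exp (y s) = H s := Real.exp_log (H_pos (le_of_lt hs))
    rw [he] at hb
    rw [Real.norm_eq_abs, Real.norm_eq_abs, abs_pow, mul_comm]
    exact hb
  have o4 : (fun s => (∑ m ∈ Finset.range 5, y s ^ m / (m.factorial : ℝ))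
      - ∑ m ∈ Finset.range 5, P s ^ m / (m.factorial : ℝ))
      =O[𝓝[>] (0 : ℝ)] (fun s => s ^ 5) := by
    have hR : (fun s : ℝ => 1 + (y s + P s) / 2 + (y s ^ 2 + y s * P s + P s ^ 2) / 6
        + (y s ^ 3 + y s ^ 2 * P s + y s * P s ^ 2 + P s ^ 3) / 24)
        =O[𝓝[>] (0 : ℝ)] (fun _ => (1 : ℝ)) := by
      refine Tendsto.isBigO_one ℝ (c := 1 + ((0:ℝ) + 0) / 2 + (0 ^ 2 + 0 * 0 + 0 ^ 2) / 6
        + (0 ^ 3 + 0 ^ 2 * 0 + 0 * 0 ^ 2 + 0 ^ 3) / 24) ?_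
      exact ((tendsto_const_nhds.add ((hy0.add hP0).div_const 2)).add
        ((((hy0.pow 2).add (hy0.mul hP0)).add (hP0.pow 2)).div_const 6)).add
        (((((hy0.pow 3).add ((hy0.pow 2).mul hP0)).add (hy0.mul (hP0.pow 2))).add
          (hP0.pow 3)).div_const 24)
    have h := o1'.mul hR
    refine (h.congr_left (fun s => ?_)).congr_right (fun s => by ring)
    simp [Finset.sum_range_succ, Nat.factorial]
    ring
  have o5 := exp_expand (2 * Real.log 2) (-z2) (2 * z3) (-(7 / 2) * z4)
  have o6 := ((o3.add o4).add o5).sub o2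
  set S1 := ∑' n : ℕ, c (n + 1) / ((n : ℝ) + 1) ^ 1
  set S2 := ∑' n : ℕ, c (n + 1) / ((n : ℝ) + 1) ^ 2
  set S3 := ∑' n : ℕ, c (n + 1) / ((n : ℝ) + 1) ^ 3
  set S4 := ∑' n : ℕ, c (n + 1) / ((n : ℝ) + 1) ^ 4
  have o7 := coeff_four (e0 := 0) (e1 := S1 - 2 * Real.log 2)
    (e2 := -S2 - (-z2 + (2 * Real.log 2) ^ 2 / 2))
    (e3 := S3 - (2 * z3 + 2 * Real.log 2 * (-z2) + (2 * Real.log 2) ^ 3 / 6))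
    (e4 := -S4 - (-(7 / 2) * z4 + 2 * Real.log 2 * (2 * z3) + (-z2) ^ 2 / 2
      + (2 * Real.log 2) ^ 2 * (-z2) / 2 + (2 * Real.log 2) ^ 4 / 24))
    (o6.congr_left (fun s => by simp only [hP]; ring))
  linarith

end CBSum

/-- ∑_{n=1}^∞ C(2n,n)/(4ⁿ·n⁴) = (1/40)·π⁴ - 4·ζ(3)·log 2 + (1/3)·π²·log²2 - (2/3)·log⁴2. -/
theorem centralBinom_inv_n4_sum :
    ((∑' n : ℕ, (Nat.centralBinom (n + 1) : ℝ) /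
        ((4 : ℝ) ^ (n + 1) * ((n : ℝ) + 1) ^ 4) : ℝ) : ℂ) =
      (1 / 40) * (Real.pi : ℂ) ^ 4 - 4 * riemannZeta 3 * (Real.log 2 : ℂ)
        + (1 / 3) * (Real.pi : ℂ) ^ 2 * (Real.log 2 : ℂ) ^ 2
        - (2 / 3) * (Real.log 2 : ℂ) ^ 4 := by
  have h3 : HasSum (fun n : ℕ => 1 / (n : ℝ) ^ 3) (∑' n : ℕ, 1 / (n : ℝ) ^ 3) :=
    (Real.summable_one_div_nat_pow.2 (by norm_num)).hasSum
  have hm := CBSum.main_real hasSum_zeta_two h3 hasSum_zeta_four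
  have hz : riemannZeta 3 = ((∑' n : ℕ, 1 / (n : ℝ) ^ 3 : ℝ) : ℂ) := by
    have := zeta_nat_eq_tsum_of_gt_one (k := 3) (by norm_num)
    push_cast at this ⊢
    exact this
  have hl : ∑' n : ℕ, (Nat.centralBinom (n + 1) : ℝ) / ((4 : ℝ) ^ (n + 1) * ((n : ℝ) + 1) ^ 4)
      = ∑' n : ℕ, CBSum.c (n + 1) / ((n : ℝ) + 1) ^ 4 := by
    refine tsum_congr (fun n => ?_)
    rw [CBSum.c, div_div]
  rw [hl, hm, hz]
  generalize (∑' n : ℕ, 1 / (n : ℝ) ^ 3 : ℝ) = z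
  push_cast
  ring
end

section
/- ∑_{n=1}^∞ C(2n,n) / (4ⁿ · n⁵) = 6·ζ(5) - (1/20)·π⁴·log 2 - (1/3)·ζ(3)·π² + 4·ζ(3)·log²2 - (2/9)·π²·log³2 + (4/15)·log⁵2. -/
open Finset Filter Topology

noncomputable def cc (n : ℕ) : ℝ := (Nat.centralBinom n : ℝ) / 4 ^ n

lemma cc_pos (n : ℕ) : 0 < cc n := by
  unfold cc
  have : (0:ℝ) < Nat.centralBinom n := by exact_mod_cast Nat.centralBinom_pos n
  positivity

lemma cc_zero : cc 0 = 1 := by simp [cc]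

lemma cc_succ (n : ℕ) : ((n:ℝ) + 1) * cc (n + 1) = ((n:ℝ) + 1/2) * cc n := by
  unfold cc
  have h : ((n:ℝ) + 1) * Nat.centralBinom (n+1) = 2 * (2 * n + 1) * Nat.centralBinom n := by
    exact_mod_cast Nat.succ_mul_centralBinom_succ n
  rw [← mul_div_assoc, h, pow_succ]
  field_simp
  ring

lemma cc_succ' (n : ℕ) : cc (n + 1) = ((n:ℝ) + 1/2) / ((n:ℝ) + 1) * cc n := by
  have := cc_succ n
  have h : (n:ℝ) + 1 ≠ 0 := by positivity
  field_simp
  linarith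

lemma cc_mul_le (a b : ℕ) : cc a * cc b ≤ cc (a + b) := by
  induction b with
  | zero => simp [cc_zero]
  | succ b ih =>
    rw [← add_assoc, cc_succ', cc_succ']
    have h1 : ((b:ℝ) + 1/2) / ((b:ℝ) + 1) ≤ (((a + b : ℕ):ℝ) + 1/2) / (((a + b : ℕ):ℝ) + 1) := by
      rw [div_le_div_iff₀ (by positivity) (by positivity)]
      push_cast
      have : (0:ℝ) ≤ a := by positivity
      nlinarith
    have h0 : 0 ≤ ((b:ℝ) + 1/2) / ((b:ℝ) + 1) := by positivity
    calc cc a * (((b:ℝ) + 1/2) / ((b:ℝ) + 1) * cc b)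
        = ((b:ℝ) + 1/2) / ((b:ℝ) + 1) * (cc a * cc b) := by ring
      _ ≤ ((b:ℝ) + 1/2) / ((b:ℝ) + 1) * cc (a + b) := by gcongr
      _ ≤ _ := by
        have := (cc_pos (a+b)).le
        gcongr

lemma cc_conv (N : ℕ) : ∑ p ∈ antidiagonal N, cc p.1 * cc p.2 = 1 := by
  have sym : ∀ N : ℕ, ∑ p ∈ antidiagonal N, (p.1:ℝ) * (cc p.1 * cc p.2)
      = (N:ℝ)/2 * ∑ p ∈ antidiagonal N, cc p.1 * cc p.2 := by
    intro N
    have h1 : ∑ p ∈ antidiagonal N, (p.1:ℝ) * (cc p.1 * cc p.2)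
        = ∑ p ∈ antidiagonal N, (p.2:ℝ) * (cc p.1 * cc p.2) := by
      rw [← Finset.Nat.sum_antidiagonal_swap]
      apply Finset.sum_congr rfl
      intro p _
      simp only [Prod.fst_swap, Prod.snd_swap]; ring
    have h2 : ∑ p ∈ antidiagonal N, (p.1:ℝ) * (cc p.1 * cc p.2)
        + ∑ p ∈ antidiagonal N, (p.2:ℝ) * (cc p.1 * cc p.2)
        = (N:ℝ) * ∑ p ∈ antidiagonal N, cc p.1 * cc p.2 := by
      rw [← Finset.sum_add_distrib, Finset.mul_sum]
      apply Finset.sum_congr rfl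
      intro p hp
      rw [HasAntidiagonal.mem_antidiagonal] at hp
      rw [← hp]; push_cast; ring
    linarith
  induction N with
  | zero => simp [cc_zero]
  | succ N ih =>
    have h := sym (N+1)
    rw [Finset.Nat.sum_antidiagonal_succ] at h
    have h3 : ∑ p ∈ antidiagonal N, ((p.1 + 1 : ℕ):ℝ) * (cc (p.1+1) * cc p.2)
        = ∑ p ∈ antidiagonal N, (p.1:ℝ) * (cc p.1 * cc p.2)
          + 1/2 * ∑ p ∈ antidiagonal N, (cc p.1 * cc p.2) := by
      rw [Finset.mul_sum, ← Finset.sum_add_distrib]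
      apply Finset.sum_congr rfl
      intro p hp
      have := cc_succ p.1
      push_cast
      rw [← mul_assoc, this]; ring
    simp only at h
    rw [h3, sym, ih] at h
    push_cast at h
    have hN : (N:ℝ) + 1 ≠ 0 := by positivity
    have : ((N:ℝ)+1) * ∑ p ∈ antidiagonal (N+1), cc p.1 * cc p.2 = ((N:ℝ)+1) * 1 := by linarith
    exact mul_left_cancel₀ hN this

noncomputable def ss (k N : ℕ) : ℝ :=
  ∑ m ∈ range N, cc (m+1) * cc (N - 1 - m) / cc N / ((m:ℝ)+1)^k

lemma ss_zero (N : ℕ) : ss 0 N = 1 / cc N - 1 := by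
  have h := cc_conv N
  have hc := (cc_pos N).ne'
  rw [Finset.Nat.sum_antidiagonal_eq_sum_range_succ (fun i j => cc i * cc j), sum_range_succ'] at h
  simp only [cc_zero, Nat.sub_zero, one_mul] at h
  have : ss 0 N = (∑ m ∈ range N, cc (m+1) * cc (N - (m+1))) / cc N := by
    unfold ss
    rw [Finset.sum_div]
    apply Finset.sum_congr rfl
    intro m _
    rw [pow_zero, div_one, show N - 1 - m = N - (m+1) by omega]
  rw [this]
  field_simp
  linarith

lemma ss_rec (k N : ℕ) : ss (k+1) (N+1) - 1/((N:ℝ)+1) * ss k (N+1)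
    = ss (k+1) N - 1/((N:ℝ)+1/2) * ss k N := by
  unfold ss
  simp only [Finset.mul_sum]
  rw [← Finset.sum_sub_distrib, ← Finset.sum_sub_distrib, sum_range_succ]
  have hlast : cc (N+1) * cc (N+1-1-N) / cc (N+1) / ((N:ℝ)+1)^(k+1)
      - 1/((N:ℝ)+1) * (cc (N+1) * cc (N+1-1-N) / cc (N+1) / ((N:ℝ)+1)^k) = 0 := by
    have : (N:ℝ)+1 ≠ 0 := by positivity
    have hc := (cc_pos (N+1)).ne'
    field_simp
    ring
  rw [hlast, add_zero]
  apply Finset.sum_congr rfl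
  intro m hm
  obtain ⟨j, rfl⟩ : ∃ j, N = m + 1 + j := ⟨N - (m+1), by have := mem_range.1 hm; omega⟩
  rw [show m + 1 + j + 1 - 1 - m = j + 1 by omega, show m + 1 + j - 1 - m = j by omega,
    cc_succ' (m+1+j), cc_succ' j]
  have h1 := (cc_pos (m+1+j)).ne'
  have h2 : (m:ℝ)+1 ≠ 0 := by positivity
  have h3 : (j:ℝ)+1 ≠ 0 := by positivity
  have h4 : (m:ℝ)+1+j+1 ≠ 0 := by positivity
  have h5 : (m:ℝ)+1+j+1/2 ≠ 0 := by positivity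
  have h6 : 2*((m:ℝ)+1+j)+1 ≠ 0 := by positivity
  push_cast
  rw [pow_succ]
  field_simp
  ring

noncomputable def hh (k N : ℕ) : ℝ := ∑ n ∈ range N, 1 / ((n:ℝ)+1)^k
noncomputable def ll (k N : ℕ) : ℝ := 2^k * hh k (2*N) - 2 * hh k N

lemma ll_succ (k N : ℕ) : ll k (N+1) = ll k N + ((1/((N:ℝ)+1/2))^k - (1/((N:ℝ)+1))^k) := by
  unfold ll hh
  rw [show 2*(N+1) = 2*N+1+1 by ring, sum_range_succ, sum_range_succ, sum_range_succ]
  have e1 : 2^k * (1 / (((2*N:ℕ):ℝ)+1)^k) = (1/((N:ℝ)+1/2))^k := by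
    rw [← one_div_pow, ← mul_pow]; congr 1; push_cast; field_simp
  have e2 : 2^k * (1 / (((2*N+1:ℕ):ℝ)+1)^k) = (1/((N:ℝ)+1))^k := by
    rw [← one_div_pow, ← mul_pow]; congr 1; push_cast; field_simp; ring
  rw [← one_div_pow ((N:ℝ)+1), mul_add, mul_add, e1, e2]
  ring

lemma ll_zero (k : ℕ) : ll k 0 = 0 := by simp [ll, hh]
lemma sss_zero (k : ℕ) : ss k 0 = 0 := by simp [ss]

lemma newton (N : ℕ) :
    ss 1 N = ll 1 N ∧
    -ss 2 N = (ll 1 N)^2/2 - ll 2 N/2 ∧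
    ss 3 N = (ll 1 N)^3/6 - ll 1 N * ll 2 N/2 + ll 3 N/3 ∧
    -ss 4 N = (ll 1 N)^4/24 - (ll 1 N)^2 * ll 2 N/4 + ll 1 N * ll 3 N/3 + (ll 2 N)^2/8
      - ll 4 N/4 ∧
    ss 5 N = (ll 1 N)^5/120 - (ll 1 N)^3 * ll 2 N/12 + (ll 1 N)^2 * ll 3 N/6
      + ll 1 N * (ll 2 N)^2/8 - ll 1 N * ll 4 N/4 - ll 2 N * ll 3 N/6 + ll 5 N/5 := by
  induction N with
  | zero => simp [ll_zero, sss_zero]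
  | succ N ih =>
    obtain ⟨i1, i2, i3, i4, i5⟩ := ih
    have r0 := ss_rec 0 N
    have r1 := ss_rec 1 N
    have r2 := ss_rec 2 N
    have r3 := ss_rec 3 N
    have r4 := ss_rec 4 N
    have hxy : 1/((N:ℝ)+1) * (1 / cc (N+1)) = 1/((N:ℝ)+1/2) * (1/cc N) := by
      rw [one_div_mul_one_div, one_div_mul_one_div, cc_succ]
    rw [ss_zero, ss_zero] at r0
    simp only [zero_add, Nat.reduceAdd] at r0 r1 r2 r3 r4
    simp only [ll_succ]
    set x := 1/((N:ℝ)+1)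
    set y := 1/((N:ℝ)+1/2)
    have j1 : ss 1 (N+1) = ll 1 N + (y^1 - x^1) := by linear_combination r0 + i1 + hxy
    rw [j1] at r1
    have j2 : -ss 2 (N+1) = (ll 1 N + (y^1 - x^1))^2/2 - (ll 2 N + (y^2-x^2))/2 := by
      linear_combination -r1 + i2 + y * i1
    have j2' := neg_eq_iff_eq_neg.1 j2
    rw [j2'] at r2
    have j3 : ss 3 (N+1) = (ll 1 N + (y^1 - x^1))^3/6 - (ll 1 N + (y^1 - x^1)) * (ll 2 N + (y^2-x^2))/2 + (ll 3 N + (y^3-x^3))/3 := by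
      linear_combination r2 + i3 + y * i2
    rw [j3] at r3
    refine ⟨j1, j2, j3, ?_⟩
    have j4 : -ss 4 (N+1) = (ll 1 N + (y^1 - x^1))^4/24 - (ll 1 N + (y^1 - x^1))^2 * (ll 2 N + (y^2-x^2))/4 + (ll 1 N + (y^1 - x^1)) * (ll 3 N + (y^3-x^3))/3 + (ll 2 N + (y^2-x^2))^2/8
      - (ll 4 N + (y^4-x^4))/4 := by
      linear_combination -r3 + i4 + y * i3
    have j4' := neg_eq_iff_eq_neg.1 j4
    rw [j4'] at r4
    refine ⟨j4, ?_⟩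
    linear_combination r4 + i5 + y * i4

lemma cc_ratio (j : ℕ) : Tendsto (fun N : ℕ => cc N / cc (N + j)) atTop (𝓝 1) := by
  induction j with
  | zero =>
    have : (fun N : ℕ => cc N / cc (N + 0)) = fun _ => (1:ℝ) := by
      funext N; exact div_self (cc_pos N).ne'
    rw [this]; exact tendsto_const_nhds
  | succ j ih =>
    have h1 : Tendsto (fun N : ℕ => 1 + (1/2:ℝ) / ((N:ℝ) + j + 1/2)) atTop (𝓝 (1 + 0)) := by
      refine tendsto_const_nhds.add (Tendsto.div_atTop tendsto_const_nhds ?_)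
      simp only [add_assoc]
      exact tendsto_atTop_add_const_right _ _ tendsto_natCast_atTop_atTop
    have h2 := ih.mul h1
    simp only [add_zero, mul_one] at h2
    refine h2.congr fun N => ?_
    rw [← add_assoc, cc_succ']
    have := (cc_pos (N+j)).ne'
    have h5 : (N:ℝ)+j+1/2 ≠ 0 := by positivity
    have h6 : 2*((N:ℝ)+j)+1 ≠ 0 := by positivity
    push_cast
    field_simp
    ring

lemma summ5 : Summable (fun m : ℕ => 1 / ((m:ℝ)+1)^5) := by
  have := (summable_nat_add_iff 1).2 (Real.summable_one_div_nat_pow.2 (show 1 < 5 by norm_num))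
  simpa using this

lemma ss_lim : Tendsto (fun N => ss 5 N) atTop (𝓝 (∑' m : ℕ, cc (m+1) / ((m:ℝ)+1)^5)) := by
  have key := tendsto_tsum_of_dominated_convergence (𝓕 := atTop)
    (f := fun (N m : ℕ) => if m < N then cc (m+1) * cc (N - 1 - m) / cc N / ((m:ℝ)+1)^5 else 0)
    (g := fun m : ℕ => cc (m+1) / ((m:ℝ)+1)^5) summ5 ?_ ?_
  · refine key.congr fun N => ?_
    rw [tsum_eq_sum (s := range N)]
    · unfold ss
      exact Finset.sum_congr rfl fun m hm => by rw [if_pos (mem_range.1 hm)]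
    · intro m hm
      rw [if_neg (fun h => hm (mem_range.2 h))]
  · intro m
    rw [← tendsto_add_atTop_iff_nat (m+1)]
    have h := ((cc_ratio (m+1)).const_mul (cc (m+1))).div_const (((m:ℝ)+1)^5)
    rw [mul_one] at h
    refine h.congr fun N => ?_
    rw [if_pos (by omega), show N + (m+1) - 1 - m = N by omega, ← mul_div_assoc]
  · refine Eventually.of_forall fun N m => ?_
    split_ifs with h
    · obtain ⟨j, rfl⟩ : ∃ j, N = m + 1 + j := ⟨N - (m+1), by omega⟩
      rw [show m + 1 + j - 1 - m = j by omega]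
      have h1 := cc_pos (m+1+j)
      have h2 := cc_pos (m+1)
      have h3 := cc_pos j
      rw [Real.norm_of_nonneg (by positivity)]
      gcongr
      rw [div_le_one h1]
      exact cc_mul_le _ _
    · rw [norm_zero]; positivity

lemma two_mul_tendsto : Tendsto (fun N : ℕ => 2 * N) atTop atTop :=
  tendsto_id.const_mul_atTop' (by norm_num)

lemma ll_lim (k : ℕ) (hk : 1 < k) (z : ℝ) (hz : ((z:ℝ):ℂ) = riemannZeta k) :
    Tendsto (ll k) atTop (𝓝 ((2^k - 2) * z)) := by
  have hz' : z = ∑' n : ℕ, 1 / ((n:ℝ)+1)^k := by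
    have h := zeta_nat_eq_tsum_of_gt_one hk
    have hs := Real.summable_one_div_nat_pow.2 hk
    have e : ((z:ℝ):ℂ) = ((∑' n : ℕ, 1 / (n:ℝ)^k : ℝ) : ℂ) := by
      rw [hz, h]; push_cast; rfl
    rw [Complex.ofReal_injective e, hs.tsum_eq_zero_add]
    simp [show k ≠ 0 by omega]
  have hsum : Summable (fun n : ℕ => 1 / ((n:ℝ)+1)^k) := by
    simpa using (summable_nat_add_iff 1).2 (Real.summable_one_div_nat_pow.2 hk)
  have h1 : Tendsto (hh k) atTop (𝓝 z) := by
    rw [hz']; exact hsum.hasSum.tendsto_sum_nat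
  have h2 := h1.comp two_mul_tendsto
  have := (h2.const_mul (2^k)).sub (h1.const_mul 2)
  rw [← sub_mul] at this
  exact this

lemma ll_lim_one : Tendsto (ll 1) atTop (𝓝 (2 * Real.log 2)) := by
  have h := Real.tendsto_harmonic_sub_log
  have h2 := h.comp two_mul_tendsto
  have h3 := ((h2.sub h).add_const (Real.log 2)).const_mul 2
  rw [sub_self, zero_add] at h3
  refine h3.congr' ?_
  filter_upwards [eventually_gt_atTop 0] with N hN
  have hN' : (N:ℝ) ≠ 0 := by positivity
  have e : ∀ M, ((harmonic M : ℚ) : ℝ) = hh 1 M := by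
    intro M; simp [harmonic, hh]
  simp only [Function.comp, e, ll]
  push_cast
  rw [Real.log_mul (by norm_num) hN']
  ring

lemma zeta_real (k : ℕ) (hk : 1 < k) : ∃ z : ℝ, (z:ℂ) = riemannZeta k := by
  refine ⟨∑' n : ℕ, 1 / (n:ℝ)^k, ?_⟩
  rw [zeta_nat_eq_tsum_of_gt_one hk]; push_cast; rfl

/-- ∑_{n=1}^∞ C(2n,n)/(4ⁿ·n⁵) = 6·ζ(5) - (1/20)·π⁴·log 2 - (1/3)·ζ(3)·π²
+ 4·ζ(3)·log²2 - (2/9)·π²·log³2 + (4/15)·log⁵2. -/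
theorem centralBinom_inv_n5_sum :
    ((∑' n : ℕ, (Nat.centralBinom (n + 1) : ℝ) /
        ((4 : ℝ) ^ (n + 1) * ((n : ℝ) + 1) ^ 5) : ℝ) : ℂ) =
      6 * riemannZeta 5 - (1 / 20) * (Real.pi : ℂ) ^ 4 * (Real.log 2 : ℂ)
        - (1 / 3) * riemannZeta 3 * (Real.pi : ℂ) ^ 2
        + 4 * riemannZeta 3 * (Real.log 2 : ℂ) ^ 2
        - (2 / 9) * (Real.pi : ℂ) ^ 2 * (Real.log 2 : ℂ) ^ 3
        + (4 / 15) * (Real.log 2 : ℂ) ^ 5 := by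

  obtain ⟨z3, h3⟩ := zeta_real 3 (by norm_num)
  obtain ⟨z5, h5⟩ := zeta_real 5 (by norm_num)
  have l1 := ll_lim_one
  have l2 := ll_lim 2 (by norm_num) (Real.pi^2/6) (by
    push_cast; exact riemannZeta_two.symm)
  have l3 := ll_lim 3 (by norm_num) z3 h3
  have l4 := ll_lim 4 (by norm_num) (Real.pi^4/90) (by
    push_cast; exact riemannZeta_four.symm)
  have l5 := ll_lim 5 (by norm_num) z5 h5
  have L := (((((((l1.pow 5).div_const 120).sub (((l1.pow 3).mul l2).div_const 12)).add
    (((l1.pow 2).mul l3).div_const 6)).add ((l1.mul (l2.pow 2)).div_const 8)).sub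
    ((l1.mul l4).div_const 4)).sub ((l2.mul l3).div_const 6)).add (l5.div_const 5)
  have E := tendsto_nhds_unique (ss_lim.congr fun N => (newton N).2.2.2.2) L
  have T : (∑' n : ℕ, (Nat.centralBinom (n + 1) : ℝ) /
        ((4 : ℝ) ^ (n + 1) * ((n : ℝ) + 1) ^ 5)) = ∑' m : ℕ, cc (m+1) / ((m:ℝ)+1)^5 := by
    refine tsum_congr fun n => ?_
    rw [cc, div_div]
  push_cast at h3 h5
  rw [T, E, ← h3, ← h5]
  push_cast
  ring
end
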